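/- Let A be a C*-algebra and let n = 2k+1 for some integer k ≥ 0. Then A is n-ideally amenable: for every closed two-sided ideal I of A, every bounded derivation from A into the (2k+1)-th dual I^(2k+1) is inner. -/

import Mathlib

/- ## Core definitions: Banach bimodules over (non-unital) complex Banach algebras,
iterated dual modules, derivations, ideal amenability, and Arens extensions. -/

noncomputable section

open ContinuousLinearMap

universe u

/-- The topological dual of a complex normed space. -/
abbrev Dl (X : Type u) [SeminormedAddCommGroup X] [NormedSpace ℂ X] : Type u := X →L[ℂ] ℂ

/-- The canonical embedding of a normed space into its double dual. -/
def inclDD (X : Type u) [SeminormedAddCommGroup X] [NormedSpace ℂ X] : X →L[ℂ] Dl (Dl X) :=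
  ContinuousLinearMap.apply ℂ ℂ

@[simp] lemma inclDD_apply {X : Type u} [SeminormedAddCommGroup X] [NormedSpace ℂ X]
    (x : X) (f : Dl X) : inclDD X x f = f x := rfl

/-- A (bounded) Banach bimodule structure of a complex Banach algebra `A`
on a complex Banach space `X`:  `l a x = a • x` and `r a x = x • a`. -/
structure Bimodule (A : Type u) [NonUnitalNormedRing A] [NormedSpace ℂ A]
    [SMulCommClass ℂ A A] [IsScalarTower ℂ A A]
    (X : Type u) [NormedAddCommGroup X] [NormedSpace ℂ X] : Type u where
  l : A →L[ℂ] X →L[ℂ] X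
  r : A →L[ℂ] X →L[ℂ] X
  l_mul : ∀ a b x, l (a * b) x = l a (l b x)
  r_mul : ∀ a b x, r (a * b) x = r b (r a x)
  lr : ∀ a b x, l a (r b x) = r b (l a x)

variable {A : Type u} [NonUnitalNormedRing A] [NormedSpace ℂ A]
  [SMulCommClass ℂ A A] [IsScalarTower ℂ A A]

/-- The dual module of a Banach bimodule: `(a·f)(x) = f(x·a)` and `(f·a)(x) = f(a·x)`. -/
def Bimodule.dualMod {X : Type u} [NormedAddCommGroup X] [NormedSpace ℂ X]
    (M : Bimodule A X) : Bimodule A (Dl X) where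
  l := ((ContinuousLinearMap.compL ℂ X X ℂ).flip).comp M.r
  r := ((ContinuousLinearMap.compL ℂ X X ℂ).flip).comp M.l
  l_mul := fun a b f => by
    ext x
    simp [M.r_mul]
  r_mul := fun a b f => by
    ext x
    simp [M.l_mul]
  lr := fun a b f => by
    ext x
    simp [M.lr]

@[simp] lemma Bimodule.dualMod_l_apply {X : Type u} [NormedAddCommGroup X] [NormedSpace ℂ X]
    (M : Bimodule A X) (a : A) (f : Dl X) (x : X) :
    M.dualMod.l a f x = f (M.r a x) := by
  simp [Bimodule.dualMod]

@[simp] lemma Bimodule.dualMod_r_apply {X : Type u} [NormedAddCommGroup X] [NormedSpace ℂ X]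
    (M : Bimodule A X) (a : A) (f : Dl X) (x : X) :
    M.dualMod.r a f x = f (M.l a x) := by
  simp [Bimodule.dualMod]

/-- A Banach `A`-bimodule, bundled with its underlying space. -/
structure BMod (A : Type u) [NonUnitalNormedRing A] [NormedSpace ℂ A]
    [SMulCommClass ℂ A A] [IsScalarTower ℂ A A] : Type (u + 1) where
  X : Type u
  [xGroup : NormedAddCommGroup X]
  [xSpace : NormedSpace ℂ X]
  act : Bimodule A X

attribute [instance] BMod.xGroup BMod.xSpace

/-- The dual of a bundled Banach bimodule. -/
def BMod.dualObj (M : BMod A) : BMod A :=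
  ⟨Dl M.X, M.act.dualMod⟩

/-- The `n`-th dual of a bundled Banach bimodule (`iter 0 = M`). -/
def BMod.iter (M : BMod A) : ℕ → BMod A
  | 0 => M
  | n + 1 => (M.iter n).dualObj

/-- A bounded derivation from `A` into the Banach `A`-bimodule `M`. -/
def IsDerivation (M : BMod A) (D : A →L[ℂ] M.X) : Prop :=
  ∀ a b : A, D (a * b) = M.act.l a (D b) + M.act.r b (D a)

/-- An inner derivation.  -/
def IsInner (M : BMod A) (D : A →L[ℂ] M.X) : Prop :=
  ∃ x : M.X, ∀ a : A, D a = M.act.l a x - M.act.r a x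

/-- `H¹(A, M) = {0}` : every bounded derivation into `M` is inner. -/
def H1Zero (M : BMod A) : Prop :=
  ∀ D : A →L[ℂ] M.X, IsDerivation M D → IsInner M D

/-- A closed two-sided ideal of the Banach algebra `A`. -/
structure ClosedIdeal (A : Type u) [NonUnitalNormedRing A] [NormedSpace ℂ A]
    [SMulCommClass ℂ A A] [IsScalarTower ℂ A A] : Type u where
  car : Submodule ℂ A
  isClosed : IsClosed (car : Set A)
  mul_mem_left : ∀ (a x : A), x ∈ car → a * x ∈ car
  mul_mem_right : ∀ (a x : A), x ∈ car → x * a ∈ car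

namespace ClosedIdeal

variable (I : ClosedIdeal A)

/-- Left multiplication action of `A` on a closed two-sided ideal. -/
def lAct : A →L[ℂ] ↥I.car →L[ℂ] ↥I.car :=
  LinearMap.mkContinuous₂
    (LinearMap.mk₂ ℂ
      (fun a x => (⟨a * (x : A), I.mul_mem_left a x x.2⟩ : ↥I.car))
      (fun a b x => Subtype.ext <| by simp [add_mul])
      (fun c a x => Subtype.ext <| by simp [smul_mul_assoc])
      (fun a x y => Subtype.ext <| by simp [mul_add])
      (fun c a x => Subtype.ext <| by simp [mul_smul_comm]))
    1
    (fun a x => by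
      simp only [LinearMap.mk₂_apply, one_mul]
      calc ‖(⟨a * (x : A), I.mul_mem_left a x x.2⟩ : ↥I.car)‖ = ‖a * (x : A)‖ := rfl
        _ ≤ ‖a‖ * ‖(x : A)‖ := norm_mul_le _ _
        _ = ‖a‖ * ‖x‖ := by rw [Submodule.coe_norm])

/-- Right multiplication action of `A` on a closed two-sided ideal. -/
def rAct : A →L[ℂ] ↥I.car →L[ℂ] ↥I.car :=
  LinearMap.mkContinuous₂
    (LinearMap.mk₂ ℂ
      (fun a x => (⟨(x : A) * a, I.mul_mem_right a x x.2⟩ : ↥I.car))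
      (fun a b x => Subtype.ext <| by simp [mul_add])
      (fun c a x => Subtype.ext <| by simp [mul_smul_comm])
      (fun a x y => Subtype.ext <| by simp [add_mul])
      (fun c a x => Subtype.ext <| by simp [smul_mul_assoc]))
    1
    (fun a x => by
      simp only [LinearMap.mk₂_apply, one_mul]
      calc ‖(⟨(x : A) * a, I.mul_mem_right a x x.2⟩ : ↥I.car)‖ = ‖(x : A) * a‖ := rfl
        _ ≤ ‖(x : A)‖ * ‖a‖ := norm_mul_le _ _
        _ = ‖x‖ * ‖a‖ := by rw [Submodule.coe_norm]
        _ = ‖a‖ * ‖x‖ := mul_comm _ _)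

@[simp] lemma lAct_apply (a : A) (x : ↥I.car) : (I.lAct a x : A) = a * (x : A) := rfl
@[simp] lemma rAct_apply (a : A) (x : ↥I.car) : (I.rAct a x : A) = (x : A) * a := rfl

/-- A closed two-sided ideal as a Banach `A`-bimodule. -/
def toBMod : BMod A where
  X := ↥I.car
  act :=
    { l := I.lAct
      r := I.rAct
      l_mul := fun a b x => Subtype.ext <| by simp [mul_assoc]
      r_mul := fun a b x => Subtype.ext <| by simp [mul_assoc]
      lr := fun a b x => Subtype.ext <| by simp [mul_assoc] }

end ClosedIdeal

/-- The Banach algebra `A` as a Banach bimodule over itself. -/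
def regBMod (A : Type u) [NonUnitalNormedRing A] [NormedSpace ℂ A]
    [SMulCommClass ℂ A A] [IsScalarTower ℂ A A] : BMod A where
  X := A
  act :=
    { l := ContinuousLinearMap.mul ℂ A
      r := (ContinuousLinearMap.mul ℂ A).flip
      l_mul := fun a b x => by simp [mul_assoc]
      r_mul := fun a b x => by simp [mul_assoc]
      lr := fun a b x => by simp [mul_assoc] }

/-- `A` is `n`-`I`-weakly amenable: `H¹(A, I⁽ⁿ⁾) = {0}`. -/
def NIWeaklyAmenable (I : ClosedIdeal A) (n : ℕ) : Prop :=
  H1Zero (I.toBMod.iter n)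

/-- `A` is `n`-ideally amenable. -/
def NIdeallyAmenable (A : Type u) [NonUnitalNormedRing A] [NormedSpace ℂ A]
    [SMulCommClass ℂ A A] [IsScalarTower ℂ A A] (n : ℕ) : Prop :=
  ∀ I : ClosedIdeal A, H1Zero (I.toBMod.iter n)

/-- `A` is `n`-weakly amenable: `H¹(A, A⁽ⁿ⁾) = {0}`. -/
def NWeaklyAmenable (A : Type u) [NonUnitalNormedRing A] [NormedSpace ℂ A]
    [SMulCommClass ℂ A A] [IsScalarTower ℂ A A] (n : ℕ) : Prop :=
  H1Zero ((regBMod A).iter n)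

/- ## Arens-type extensions of bounded bilinear maps to biduals -/

section Arens

variable {E F G : Type*}
  [SeminormedAddCommGroup E] [NormedSpace ℂ E]
  [SeminormedAddCommGroup F] [NormedSpace ℂ F]
  [SeminormedAddCommGroup G] [NormedSpace ℂ G]

/-- Auxiliary map for the Arens extension:
`arT b Ψ g = (e ↦ Ψ (g ∘ b e))`. -/
def arT (b : E →L[ℂ] F →L[ℂ] G) (Ψ : Dl (Dl F)) (g : Dl G) : Dl E :=
  LinearMap.mkContinuous
    { toFun := fun e => Ψ (g.comp (b e))
      map_add' := fun e e' => by simp only [map_add, ContinuousLinearMap.comp_add, map_add]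
      map_smul' := fun c e => by
        simp only [map_smul, ContinuousLinearMap.comp_smul, map_smul, RingHom.id_apply] }
    (‖Ψ‖ * ‖g‖ * ‖b‖)
    (fun e => by
      calc ‖Ψ (g.comp (b e))‖ ≤ ‖Ψ‖ * ‖g.comp (b e)‖ := Ψ.le_opNorm _
        _ ≤ ‖Ψ‖ * (‖g‖ * ‖b e‖) := by gcongr; exact g.opNorm_comp_le _
        _ ≤ ‖Ψ‖ * (‖g‖ * (‖b‖ * ‖e‖)) := by gcongr; exact b.le_opNorm e
        _ = ‖Ψ‖ * ‖g‖ * ‖b‖ * ‖e‖ := by ring)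

@[simp] lemma arT_apply (b : E →L[ℂ] F →L[ℂ] G) (Ψ : Dl (Dl F)) (g : Dl G)
    (e : E) : arT b Ψ g e = Ψ (g.comp (b e)) := rfl

lemma arT_add_right (b : E →L[ℂ] F →L[ℂ] G) (Ψ Ψ' : Dl (Dl F)) (g : Dl G) :
    arT b (Ψ + Ψ') g = arT b Ψ g + arT b Ψ' g := by
  ext e; simp

lemma arT_smul_right (b : E →L[ℂ] F →L[ℂ] G) (c : ℂ) (Ψ : Dl (Dl F)) (g : Dl G) :
    arT b (c • Ψ) g = c • arT b Ψ g := by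
  ext e; simp

lemma arT_add_g (b : E →L[ℂ] F →L[ℂ] G) (Ψ : Dl (Dl F)) (g g' : Dl G) :
    arT b Ψ (g + g') = arT b Ψ g + arT b Ψ g' := by
  ext e; simp [ContinuousLinearMap.add_comp]

lemma arT_smul_g (b : E →L[ℂ] F →L[ℂ] G) (c : ℂ) (Ψ : Dl (Dl F)) (g : Dl G) :
    arT b Ψ (c • g) = c • arT b Ψ g := by
  ext e; simp [ContinuousLinearMap.smul_comp]

/-- One half of the Arens extension: `(arExtFun b Φ Ψ) g = Φ (e ↦ Ψ (g ∘ b e))`. -/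
def arExtFun (b : E →L[ℂ] F →L[ℂ] G) (Φ : Dl (Dl E)) (Ψ : Dl (Dl F)) :
    Dl (Dl G) :=
  LinearMap.mkContinuous
    { toFun := fun g => Φ (arT b Ψ g)
      map_add' := fun g g' => by simp only [arT_add_g, map_add]
      map_smul' := fun c g => by simp only [arT_smul_g, map_smul, RingHom.id_apply] }
    (‖Φ‖ * ‖Ψ‖ * ‖b‖)
    (fun g => by
      calc ‖Φ (arT b Ψ g)‖ ≤ ‖Φ‖ * ‖arT b Ψ g‖ := Φ.le_opNorm _
        _ ≤ ‖Φ‖ * (‖Ψ‖ * ‖g‖ * ‖b‖) := by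
            gcongr
            exact LinearMap.mkContinuous_norm_le _ (by positivity) _
        _ = ‖Φ‖ * ‖Ψ‖ * ‖b‖ * ‖g‖ := by ring)

@[simp] lemma arExtFun_apply (b : E →L[ℂ] F →L[ℂ] G) (Φ : Dl (Dl E))
    (Ψ : Dl (Dl F)) (g : Dl G) : arExtFun b Φ Ψ g = Φ (arT b Ψ g) := rfl

lemma arExtFun_norm_le (b : E →L[ℂ] F →L[ℂ] G) (Φ : Dl (Dl E))
    (Ψ : Dl (Dl F)) : ‖arExtFun b Φ Ψ‖ ≤ ‖Φ‖ * ‖Ψ‖ * ‖b‖ :=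
  LinearMap.mkContinuous_norm_le _ (by positivity) _

/-- The (first-)Arens-type extension of a bounded bilinear map `b : E × F → G` to the
biduals, obtained by iterated weak* limits (outer limit in the first variable):
`(arExt b Φ Ψ) g = Φ (e ↦ Ψ (g ∘ b e))`. -/
def arExt (b : E →L[ℂ] F →L[ℂ] G) :
    Dl (Dl E) →L[ℂ] Dl (Dl F) →L[ℂ] Dl (Dl G) :=
  LinearMap.mkContinuous₂
    (LinearMap.mk₂ ℂ (arExtFun b)
      (fun Φ Φ' Ψ => by ext g; simp)
      (fun c Φ Ψ => by ext g; simp)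
      (fun Φ Ψ Ψ' => by ext g; simp [arT_add_right])
      (fun c Φ Ψ => by ext g; simp [arT_smul_right]))
    ‖b‖
    (fun Φ Ψ => by
      simp only [LinearMap.mk₂_apply]
      exact (arExtFun_norm_le b Φ Ψ).trans (le_of_eq (by ring)))

@[simp] lemma arExt_apply (b : E →L[ℂ] F →L[ℂ] G) (Φ : Dl (Dl E))
    (Ψ : Dl (Dl F)) (g : Dl G) : arExt b Φ Ψ g = Φ (arT b Ψ g) := rfl

end Arens

/- ## Arens products and Arens module extensions -/

/-- The first Arens product on the bidual of a Banach algebra. -/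
def arensMul (A : Type u) [NonUnitalNormedRing A] [NormedSpace ℂ A]
    [SMulCommClass ℂ A A] [IsScalarTower ℂ A A] :
    Dl (Dl A) →L[ℂ] Dl (Dl A) →L[ℂ] Dl (Dl A) :=
  arExt (ContinuousLinearMap.mul ℂ A)

/-- The second Arens product on the bidual of a Banach algebra. -/
def arensMul₂ (A : Type u) [NonUnitalNormedRing A] [NormedSpace ℂ A]
    [SMulCommClass ℂ A A] [IsScalarTower ℂ A A]
    (F G : Dl (Dl A)) : Dl (Dl A) :=
  arExt (ContinuousLinearMap.mul ℂ A).flip G F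

namespace Bimodule

variable {X : Type u} [NormedAddCommGroup X] [NormedSpace ℂ X]

/-- First (iterated weak*-limit) extension of the left action:
`a'' · x'' = w*-lim_i lim_j a_i • x_j`. -/
def lExt (M : Bimodule A X) (F : Dl (Dl A)) (ξ : Dl (Dl X)) :
    Dl (Dl X) :=
  arExt M.l F ξ

/-- Second extension of the left action: `a'' · x'' = w*-lim_j lim_i a_i • x_j`. -/
def lExt₂ (M : Bimodule A X) (F : Dl (Dl A)) (ξ : Dl (Dl X)) :
    Dl (Dl X) :=
  arExt M.l.flip ξ F

/-- First (iterated weak*-limit) extension of the right action: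
`x'' · a'' = w*-lim_j lim_i x_j • a_i`. -/
def rExt (M : Bimodule A X) (ξ : Dl (Dl X)) (F : Dl (Dl A)) :
    Dl (Dl X) :=
  arExt M.r.flip ξ F

/-- Second extension of the right action: `x'' · a'' = w*-lim_i lim_j x_j • a_i`. -/
def rExt₂ (M : Bimodule A X) (ξ : Dl (Dl X)) (F : Dl (Dl A)) :
    Dl (Dl X) :=
  arExt M.r F ξ

/-- The topological centre of the right module action of `A` on `X`, i.e. the set of
`x'' ∈ X**` such that `a'' ↦ x'' · a''` is weak*-weak* continuous. -/
def rTopCenter (M : Bimodule A X) : Set (Dl (Dl X)) :=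
  {ξ | Continuous fun F : WeakDual ℂ (Dl A) => (M.rExt ξ F : WeakDual ℂ (Dl X))}

end Bimodule

/-- The topological centre of the bidual of a Banach algebra (with the first
Arens product): the set of `F ∈ A**` for which `G ↦ F □ G` is weak*-weak* continuous. -/
def arensTopCenter (A : Type u) [NonUnitalNormedRing A] [NormedSpace ℂ A]
    [SMulCommClass ℂ A A] [IsScalarTower ℂ A A] : Set (Dl (Dl A)) :=
  {F | Continuous fun G : WeakDual ℂ (Dl A) => (arensMul A F G : WeakDual ℂ (Dl A))}

/- ## Adjoint maps -/

section DMap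

variable {E F : Type*} [SeminormedAddCommGroup E] [NormedSpace ℂ E]
  [SeminormedAddCommGroup F] [NormedSpace ℂ F]

/-- The adjoint (dual map) of a bounded operator. -/
def dMap (f : E →L[ℂ] F) : Dl F →L[ℂ] Dl E :=
  (ContinuousLinearMap.compL ℂ E F ℂ).flip f

@[simp] lemma dMap_apply (f : E →L[ℂ] F) (g : Dl F) : dMap f g = g.comp f := rfl

/-- The canonical projection `X⁽⁴⁾ → X⁽²⁾`, i.e. the adjoint of the canonical
embedding `X* → X***`. -/
def Pmap (X : Type u) [SeminormedAddCommGroup X] [NormedSpace ℂ X] :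
    Dl (Dl (Dl (Dl X))) →L[ℂ] Dl (Dl X) :=
  dMap (inclDD (Dl X))

end DMap

/-!
The even dual `I⁽²ᵏ⁾` of a closed ideal `I` is isometric to a C⋆-algebra: closed ideals are
self-adjoint, and biduals of C⋆-algebras are C⋆-algebras by the Sherman–Takeda theorem. Hence
`I⁽²ᵏ⁺¹⁾` is isometric to the predual of a von Neumann algebra, and splitting functionals into
their normal and singular parts shows that it is a semi-L-summand in its bidual.

By an argument of Bader, Gelander and Monod, a group of affine isometries of such a space which
has a bounded orbit has a fixed point: the Chebyshev centres of the orbit taken in the bidual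
already lie in the space, so they form a weakly compact convex invariant set, to which the
Ryll-Nardzewski theorem applies.

For a derivation `D`, extended by `0` to the unitization, the unitaries act by the affine
isometries `x ↦ (u x + D u) u⋆`, with bounded orbits. A fixed point `x` satisfies
`D u = x u - u x`, and the unitaries span the unitization.
-/

section Boundary

open Set

lemma exists_isOpen_inter_subset_of_subset_iUnion {X ι : Type*} [TopologicalSpace X] [R1Space X]
    [Countable ι] {K : Set X} (hK : IsCompact K) (hne : K.Nonempty) {F : ι → Set X}
    (hF : ∀ i, IsClosed (F i)) (hcover : K ⊆ ⋃ i, F i) :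
    ∃ i, ∃ W, IsOpen W ∧ (K ∩ W).Nonempty ∧ K ∩ W ⊆ F i := by
  have : CompactSpace K := isCompact_iff_compactSpace.mp hK
  have : Nonempty K := hne.to_subtype
  obtain ⟨i, x, hx⟩ := nonempty_interior_of_iUnion_of_closed
    (f := fun i => ((↑) : K → X) ⁻¹' F i) (fun i => (hF i).preimage continuous_subtype_val)
    (by rw [← preimage_iUnion]; exact preimage_eq_univ_iff.2 (by simpa using hcover))
  obtain ⟨W, hW, hWi⟩ := isOpen_induced_iff.mp (isOpen_interior (s := ((↑) : K → X) ⁻¹' F i))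
  have hmem (y : K) : (y : X) ∈ W ↔ y ∈ interior (((↑) : K → X) ⁻¹' F i) := by
    rw [← hWi, mem_preimage]
  exact ⟨i, W, hW, ⟨x, x.2, (hmem x).2 hx⟩, fun y hy =>
    interior_subset (s := ((↑) : K → X) ⁻¹' F i) ((hmem ⟨y, hy.1⟩).1 hy.2)⟩

lemma exists_slice_convexJoin_seminorm_le {E : Type*} [AddCommGroup E]
    [Module ℝ E] (ν : Seminorm ℝ E) (φ : E →ₗ[ℝ] ℝ) {s t : Set E} {d : E}
    {R δ a M : ℝ} (hδ : 0 < δ) (hR : 0 ≤ R) (haM : a < M) (hsφ : ∀ x ∈ s, φ x ≤ a)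
    (htφ : ∀ x ∈ t, φ x ≤ M) (hsν : ∀ x ∈ s, ν (x - d) ≤ R) (htν : ∀ x ∈ t, ν (x - d) ≤ δ) :
    ∃ r < M, ∀ x ∈ convexJoin ℝ s t, r < φ x → ν (x - d) ≤ 2 * δ := by
  have : 0 < M - a := sub_pos.2 haM
  refine ⟨M - δ * (M - a) / (R + 1), sub_lt_self _ (by positivity), ?_⟩
  rintro x hx hφx
  obtain ⟨y, hy, z, hz, hx⟩ := mem_convexJoin.mp hx
  rw [segment_symm, segment_eq_image] at hx
  obtain ⟨p, ⟨hp0, hp1⟩, rfl⟩ := hx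
  have hp : p * (R + 1) < δ := by
    have hpa : p * (M - a) < δ * (M - a) / (R + 1) := by
      simp only [map_add, map_smul, smul_eq_mul] at hφx
      nlinarith [hsφ y hy, htφ z hz]
    rw [lt_div_iff₀ (by linarith)] at hpa
    nlinarith
  have hsplit : (1 - p) • z + p • y - d = (1 - p) • (z - d) + p • (y - d) := by module
  calc ν ((1 - p) • z + p • y - d) ≤ ν ((1 - p) • (z - d)) + ν (p • (y - d)) :=
        hsplit ▸ map_add_le_add ν _ _
    _ = (1 - p) * ν (z - d) + p * ν (y - d) := by
        rw [map_smul_eq_mul, map_smul_eq_mul, Real.norm_of_nonneg hp0,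
          Real.norm_of_nonneg (sub_nonneg.2 hp1)]
    _ ≤ (1 - p) * δ + p * R := by
        have := sub_nonneg.2 hp1
        gcongr
        exacts [htν z hz, hsν y hy]
    _ ≤ 2 * δ := by nlinarith

variable {E : Type*} [AddCommGroup E] [Module ℝ E] [TopologicalSpace E]

/-- A closed subset `K` of `Q` is a *boundary* of `Q` if every continuous real functional is as
large on `K` as on `Q`; a minimal boundary is the substitute used here for the closure of the set
of extreme points. -/
def IsBoundary (Q K : Set E) : Prop :=
  IsClosed K ∧ K ⊆ Q ∧ ∀ φ : E →L[ℝ] ℝ, ∀ q ∈ Q, ∃ x ∈ K, φ q ≤ φ x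

lemma isBoundary_sInter_of_isChain {Q : Set E} (hQ : IsCompact Q) {c : Set (Set E)}
    (hc : ∀ K ∈ c, IsBoundary Q K) (hchain : IsChain (· ⊆ ·) c) (hne : c.Nonempty) :
    IsBoundary Q (⋂₀ c) := by
  have : Nonempty c := hne.to_subtype
  obtain ⟨K₀, hK₀⟩ := hne
  refine ⟨isClosed_sInter fun K hK => (hc K hK).1,
    (sInter_subset_of_mem hK₀).trans (hc K₀ hK₀).2.1, fun φ q hq => ?_⟩
  have hclosed (K : c) : IsClosed (K.1 ∩ {x | φ q ≤ φ x}) :=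
    (hc K K.2).1.inter (isClosed_le continuous_const φ.continuous)
  obtain ⟨x, hx⟩ := IsCompact.nonempty_iInter_of_directed_nonempty_isCompact_isClosed
    (fun K : c => K.1 ∩ {x | φ q ≤ φ x})
    (fun K L => (hchain.total K.2 L.2).elim
      (fun h => ⟨K, subset_rfl, inter_subset_inter_left _ h⟩)
      (fun h => ⟨L, inter_subset_inter_left _ h, subset_rfl⟩))
    (fun K => (hc K K.2).2.2 φ q hq)
    (fun K => hQ.of_isClosed_subset (hclosed K) (inter_subset_left.trans (hc K K.2).2.1))
    hclosed
  rw [mem_iInter] at hx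
  exact ⟨x, fun K hK => (hx ⟨K, hK⟩).1, (hx ⟨K₀, hK₀⟩).2⟩

lemma exists_minimal_isBoundary [T2Space E] {Q : Set E} (hQ : IsCompact Q) :
    ∃ K, Minimal (IsBoundary Q) K := by
  obtain ⟨K, -, hK⟩ := zorn_superset_nonempty {K | IsBoundary Q K}
    (fun c hc hchain hne => ⟨⋂₀ c, isBoundary_sInter_of_isChain hQ hc hchain hne,
      fun _ => sInter_subset_of_mem⟩) Q
    ⟨hQ.isClosed, subset_rfl, fun _ q hq => ⟨q, hq, le_rfl⟩⟩
  exact ⟨K, hK⟩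

lemma IsBoundary.nonempty {Q K : Set E} (hK : IsBoundary Q K) (hQ : Q.Nonempty) : K.Nonempty := by
  obtain ⟨q, hq⟩ := hQ
  obtain ⟨x, hx, -⟩ := hK.2.2 0 q hq
  exact ⟨x, hx⟩

lemma IsBoundary.exists_le_of_inter_isOpen {Q K W : Set E} (hK : Minimal (IsBoundary Q) K)
    (hQ : IsCompact Q) (hW : IsOpen W) (hKW : (K ∩ W).Nonempty) :
    ∃ φ : E →L[ℝ] ℝ, ∃ q ∈ Q, ∃ s < φ q, ∀ x ∈ K \ W, φ x ≤ s := by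
  obtain ⟨φ, q, hq, hφ⟩ : ∃ φ : E →L[ℝ] ℝ, ∃ q ∈ Q, ∀ x ∈ K \ W, φ x < φ q := by
    by_contra! hcon
    obtain ⟨x, hxK, hxW⟩ := hKW
    have hsub := hK.le_of_le
      ⟨hK.prop.1.sdiff hW, sdiff_subset.trans hK.prop.2.1, hcon⟩ sdiff_subset
    exact (hsub hxK).2 hxW
  have hcomp : IsCompact (K \ W) :=
    (hQ.of_isClosed_subset hK.prop.1 hK.prop.2.1).diff hW
  refine ⟨φ, q, hq, ?_⟩
  rcases (K \ W).eq_empty_or_nonempty with hempty | hne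
  · exact ⟨φ q - 1, by linarith, by simp [hempty]⟩
  · obtain ⟨x, hx, hmax⟩ := hcomp.exists_isMaxOn hne φ.continuous.continuousOn
    exact ⟨φ x, hφ x hx, fun y hy => hmax hy⟩

variable [IsTopologicalAddGroup E] [ContinuousSMul ℝ E]

lemma IsBoundary.subset_of_convex [LocallyConvexSpace ℝ E] {Q K C : Set E} (hK : IsBoundary Q K)
    (hKC : K ⊆ C) (hC : Convex ℝ C) (hCc : IsClosed C) : Q ⊆ C := by
  intro x hx
  by_contra hxC
  obtain ⟨φ, u, hφC, hφx⟩ := geometric_hahn_banach_closed_point hC hCc hxC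
  obtain ⟨y, hy, hxy⟩ := hK.2.2 φ x hx
  linarith [hφC y (hKC hy)]

lemma isCompact_convexJoin {s t : Set E} (hs : IsCompact s) (ht : IsCompact t) :
    IsCompact (convexJoin ℝ s t) := by
  have himage : convexJoin ℝ s t =
      (fun p : ℝ × E × E => (1 - p.1) • p.2.1 + p.1 • p.2.2) '' (Icc 0 1 ×ˢ s ×ˢ t) := by
    ext x
    simp only [mem_convexJoin, segment_eq_image, mem_image, mem_prod, Prod.exists]
    exact ⟨fun ⟨a, ha, b, hb, r, hr, hx⟩ => ⟨r, a, b, ⟨hr, ha, hb⟩, hx⟩,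
      fun ⟨r, a, b, ⟨hr, ha, hb⟩, hx⟩ => ⟨a, ha, b, hb, r, hr, hx⟩⟩
  rw [himage]
  exact (isCompact_Icc.prod (hs.prod ht)).image (by fun_prop)

lemma IsBoundary.subset_convexJoin [T2Space E] [LocallyConvexSpace ℝ E] {Q K s t : Set E}
    (hK : IsBoundary Q K) (hKst : K ⊆ s ∪ t) (hs : IsCompact s) (ht : IsCompact t)
    (hsc : Convex ℝ s) (htc : Convex ℝ t) (hsne : s.Nonempty) (htne : t.Nonempty) :
    Q ⊆ convexJoin ℝ s t :=
  hK.subset_of_convex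
    (hKst.trans (union_subset (subset_convexJoin_left htne) (subset_convexJoin_right hsne)))
    (hsc.convexJoin htc) (isCompact_convexJoin hs ht).isClosed

theorem exists_slice_seminorm_sub_le [T2Space E] [LocallyConvexSpace ℝ E] (ν : Seminorm ℝ E)
    (hν : ∀ d r, IsClosed (ν.closedBall d r)) {Q : Set E} (hQ : IsCompact Q) (hQc : Convex ℝ Q)
    (hne : Q.Nonempty) {δ R : ℝ} (hδ : 0 < δ) (hR : ∀ x ∈ Q, ∀ y ∈ Q, ν (x - y) ≤ R)
    {ι : Type*} [Countable ι] {d : ι → E} (hdQ : ∀ i, d i ∈ Q)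
    (hcover : Q ⊆ ⋃ i, ν.closedBall (d i) δ) :
    ∃ (φ : E →L[ℝ] ℝ) (r : ℝ), (∃ z ∈ Q, r < φ z) ∧
      ∀ x ∈ Q, ∀ y ∈ Q, r < φ x → r < φ y → ν (x - y) ≤ 4 * δ := by
  suffices ∃ (φ : E →L[ℝ] ℝ) (r : ℝ) (d : E), (∃ z ∈ Q, r < φ z) ∧
      ∀ x ∈ Q, r < φ x → ν (x - d) ≤ 2 * δ by
    obtain ⟨φ, r, d, hslice, hd⟩ := this
    refine ⟨φ, r, hslice, fun x hx y hy hxr hyr => ?_⟩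
    calc ν (x - y) = ν ((x - d) - (y - d)) := by rw [sub_sub_sub_cancel_right]
      _ ≤ ν (x - d) + ν (y - d) := map_sub_le_add _ _ _
      _ ≤ 4 * δ := by linarith [hd x hx hxr, hd y hy hyr]
  obtain ⟨K, hK⟩ := exists_minimal_isBoundary hQ
  obtain ⟨-, hKQ, -⟩ := hK.prop
  obtain ⟨i, W, hW, hKWne, hKW⟩ := exists_isOpen_inter_subset_of_subset_iUnion
    (hQ.of_isClosed_subset hK.prop.1 hKQ) (hK.prop.nonempty hne) (fun i => hν (d i) δ)
    (hKQ.trans hcover)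
  by_cases hKd : K ⊆ ν.closedBall (d i) δ
  · obtain ⟨z, hz⟩ := hne
    refine ⟨0, -1, d i, ⟨z, hz, by simp⟩, fun x hx _ => ?_⟩
    have hxd := hK.prop.subset_of_convex hKd (ν.convex_closedBall _ _) (hν _ _) hx
    exact (ν.mem_closedBall.1 hxd).trans (by linarith)
  obtain ⟨φ, q, hq, s, hsq, hφs⟩ := IsBoundary.exists_le_of_inter_isOpen hK hQ hW hKWne
  obtain ⟨m, hm, hmax⟩ := hQ.exists_isMaxOn hne φ.continuous.continuousOn
  obtain ⟨r, hrm, hr⟩ := exists_slice_convexJoin_seminorm_le ν φ.toLinearMap (a := s) (M := φ m)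
    (s := Q ∩ {x | φ x ≤ s}) (t := Q ∩ ν.closedBall (d i) δ) hδ
    ((apply_nonneg ν _).trans (hR m hm m hm)) (hsq.trans_le (hmax hq)) (fun x hx => hx.2)
    (fun x hx => hmax hx.1) (fun x hx => hR x hx.1 _ (hdQ i)) (fun x hx => hx.2)
  refine ⟨φ, r, d i, ⟨m, hm, hrm⟩, fun x hx => hr x ?_⟩
  have hsub : K ⊆ Q ∩ {x | φ x ≤ s} ∪ Q ∩ ν.closedBall (d i) δ := fun x hx => by
    by_cases hxW : x ∈ W
    · exact .inr ⟨hKQ hx, hKW ⟨hx, hxW⟩⟩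
    · exact .inl ⟨hKQ hx, hφs x ⟨hx, hxW⟩⟩
  refine hK.prop.subset_convexJoin hsub (hQ.inter_right (isClosed_le φ.continuous continuous_const))
    (hQ.inter_right (hν _ _)) (hQc.inter (convex_halfSpace_le φ.toLinearMap.isLinear s))
    (hQc.inter (ν.convex_closedBall _ _)) ?_ ⟨d i, hdQ i, ν.mem_closedBall_self hδ.le⟩ hx
  obtain ⟨y, hyK, hyd⟩ := not_subset.1 hKd
  exact ⟨y, (hsub hyK).resolve_right fun h => hyd h.2⟩

end Boundary

section RyllNardzewski

open Set Filter Topology Function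

section AffineSum

variable {𝕜 E F : Type*} [Ring 𝕜] [AddCommGroup E] [Module 𝕜 E] [AddCommGroup F] [Module 𝕜 F]

lemma affineMap_sum_smul (f : E →ᵃ[𝕜] F) {ι : Type*} (s : Finset ι) {w : ι → 𝕜}
    (hw : ∑ i ∈ s, w i = 1) (p : ι → E) :
    f (∑ i ∈ s, w i • p i) = ∑ i ∈ s, w i • f (p i) := by
  rw [← s.affineCombination_eq_linear_combination p w hw, s.map_affineCombination p w hw,
    s.affineCombination_eq_linear_combination _ w hw]
  rfl

end AffineSum

lemma sum_inv_card_eq_one {ι : Type*} {s : Finset ι} (hs : s.Nonempty) :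
    ∑ _i ∈ s, (s.card : ℝ)⁻¹ = 1 := by
  simp [hs.card_ne_zero]

lemma sum_inv_card_smul_eq_iff {E ι : Type*} [AddCommGroup E] [Module ℝ E] {s : Finset ι}
    (hs : s.Nonempty) {p : ι → E} {x : E} :
    ∑ i ∈ s, (s.card : ℝ)⁻¹ • p i = x ↔ ∑ i ∈ s, (p i - x) = 0 := by
  rw [← Finset.smul_sum, inv_smul_eq_iff₀ (Nat.cast_ne_zero.2 hs.card_ne_zero),
    Finset.sum_sub_distrib, sub_eq_zero, Finset.sum_const, Nat.cast_smul_eq_nsmul]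

variable {E : Type*} [AddCommGroup E] [Module ℝ E] [TopologicalSpace E]
  [IsTopologicalAddGroup E] [ContinuousSMul ℝ E]

theorem exists_mem_isFixedPt_of_affine [T2Space E] {Q : Set E} (hQ : IsCompact Q)
    (hQc : Convex ℝ Q) (hne : Q.Nonempty) (f : E →ᴬ[ℝ] E) (hf : MapsTo f Q Q) :
    ∃ x ∈ Q, f x = x := by
  obtain ⟨x, hx⟩ := hne
  let a (n : ℕ) : E := birkhoffAverage ℝ f id (n + 1) x
  have ha_eq (n : ℕ) (y : E) : birkhoffAverage ℝ f id (n + 1) y =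
      ∑ k ∈ Finset.range (n + 1), ((n + 1 : ℕ) : ℝ)⁻¹ • f^[k] y := Finset.smul_sum
  have hw (n : ℕ) : ∑ _k ∈ Finset.range (n + 1), ((n + 1 : ℕ) : ℝ)⁻¹ = 1 := by
    simpa only [Finset.card_range] using sum_inv_card_eq_one Finset.nonempty_range_add_one
  have haQ (n : ℕ) : a n ∈ Q := by
    rw [show a n = _ from ha_eq n x]
    exact hQc.sum_mem (fun _ _ => by positivity) (hw n) fun k _ => hf.iterate k hx
  have hfa (n : ℕ) : f (a n) - a n = ((n + 1 : ℕ) : ℝ)⁻¹ • (f^[n + 1] x - x) := by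
    have hcomm : f (a n) = birkhoffAverage ℝ f id (n + 1) (f x) := by
      have h := affineMap_sum_smul (f : E →ᵃ[ℝ] E) _ (hw n) fun k => f^[k] x
      simp only [a, ha_eq, ← iterate_succ_apply, iterate_succ_apply']
      exact h
    rw [hcomm]
    exact birkhoffAverage_apply_sub_birkhoffAverage f id (n + 1) x
  have hlim : Tendsto (fun n => f (a n) - a n) atTop (𝓝 0) := by
    have hbdd := ((hQ.vadd (-x)).isVonNBounded ℝ).smul_tendsto_zero (l := atTop)
      (x := fun n => f^[n + 1] x - x) (ε := fun n : ℕ => ((n + 1 : ℕ) : ℝ)⁻¹)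
      (.of_forall fun n => ⟨_, hf.iterate (n + 1) hx, neg_add_eq_sub _ _⟩)
      (tendsto_inv_atTop_nhds_zero_nat.comp (tendsto_add_atTop_nat 1))
    simp only [hfa]
    exact hbdd
  obtain ⟨z, hz, hza⟩ := hQ.exists_mapClusterPt (f := atTop) (u := a)
    (tendsto_principal.2 (.of_forall haQ))
  refine ⟨z, hz, sub_eq_zero.1 ?_⟩
  have hcl : MapClusterPt (f z - z) atTop fun n => f (a n) - a n :=
    hza.continuousAt_comp (f := fun y => f y - y)
      (f.continuous.sub continuous_id).continuousAt
  exact eq_of_nhds_neBot (hcl.clusterPt.mono hlim)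

lemma exists_mem_sum_sub_eq_zero [T2Space E] {Q : Set E} (hQ : IsCompact Q)
    (hQc : Convex ℝ Q) (hne : Q.Nonempty) (s : Finset (E →ᴬ[ℝ] E)) (hs : ∀ g ∈ s, MapsTo g Q Q) :
    ∃ x ∈ Q, ∑ g ∈ s, (g x - x) = 0 := by
  rcases s.eq_empty_or_nonempty with rfl | hsne
  · exact ⟨_, hne.some_mem, rfl⟩
  have havg (x : E) : ((s.card : ℝ)⁻¹ • ∑ g ∈ s, g : E →ᴬ[ℝ] E) x =
      ∑ g ∈ s, (s.card : ℝ)⁻¹ • g x := by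
    rw [ContinuousAffineMap.smul_apply, ← Finset.smul_sum]
    exact congrArg _ <| map_sum
      ({ toFun h := h x, map_zero' := rfl, map_add' _ _ := rfl } : (E →ᴬ[ℝ] E) →+ E) _ s
  obtain ⟨x, hx, hfix⟩ := exists_mem_isFixedPt_of_affine hQ hQc hne
    ((s.card : ℝ)⁻¹ • ∑ g ∈ s, g) fun x hx => by
      rw [havg]
      exact hQc.sum_mem (fun _ _ => by positivity) (sum_inv_card_eq_one hsne)
        fun g hg => hs g hg hx
  exact ⟨x, hx, (sum_inv_card_smul_eq_iff hsne).1 (havg x ▸ hfix)⟩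

lemma exists_seminorm_sub_le_of_sum_eq [T2Space E] [LocallyConvexSpace ℝ E] (ν : Seminorm ℝ E)
    (hν : ∀ d r, IsClosed (ν.closedBall d r)) {M : Submonoid (E →ᵃ[ℝ] E)}
    {s : Finset (E →ᵃ[ℝ] E)} (hsM : ∀ g ∈ s, g ∈ M) (hs : s.Nonempty) {x : E}
    (hx : ∑ g ∈ s, (g x - x) = 0) {P : Set E}
    (hP : P = closure (convexHull ℝ ((fun g : E →ᵃ[ℝ] E => g x) '' M)))
    (hPcomp : IsCompact P) {δ R : ℝ} (hδ : 0 < δ) (hR : ∀ y ∈ P, ∀ z ∈ P, ν (y - z) ≤ R)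
    {ι : Type*} [Countable ι] {d : ι → E} (hdP : ∀ i, d i ∈ P)
    (hcover : P ⊆ ⋃ i, ν.closedBall (d i) δ) :
    ∃ m ∈ M, ∃ g ∈ s, ν (m (g x) - m x) ≤ 4 * δ := by
  have hOP {m : E →ᵃ[ℝ] E} (hm : m ∈ M) : m x ∈ P :=
    hP ▸ subset_closure (subset_convexHull ℝ _ ⟨m, hm, rfl⟩)
  obtain ⟨φ, r, ⟨z, hz, hrz⟩, hslice⟩ := exists_slice_seminorm_sub_le ν hν hPcomp
    (hP ▸ (convex_convexHull ℝ _).closure) ⟨_, hOP M.one_mem⟩ hδ hR hdP hcover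
  obtain ⟨m, hm, hrm⟩ : ∃ m ∈ M, r < φ (m x) := by
    by_contra! hle
    have hsub : P ⊆ {y | φ y ≤ r} := hP ▸ closure_minimal
      (convexHull_min (image_subset_iff.2 hle) (convex_halfSpace_le φ.toLinearMap.isLinear r))
      (isClosed_le φ.continuous continuous_const)
    exact (hsub hz).not_gt hrz
  obtain ⟨g, hg, hrg⟩ : ∃ g ∈ s, r < φ (m (g x)) := by
    by_contra! hle
    have hmx : φ (m x) = ∑ g ∈ s, (s.card : ℝ)⁻¹ • φ (m (g x)) := by
      conv_lhs => rw [← (sum_inv_card_smul_eq_iff hs).2 hx]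
      exact affineMap_sum_smul (φ.toLinearMap.toAffineMap.comp m) s (sum_inv_card_eq_one hs) _
    have hmem := (convex_Iic r).sum_mem (fun _ _ => by positivity) (sum_inv_card_eq_one hs) hle
    exact (mem_Iic.1 (hmx ▸ hmem)).not_gt hrm
  exact ⟨m, hm, g, hg, hslice _ (hOP (M.mul_mem hm (hsM g hg))) _ (hOP hm) hrg hrm⟩

lemma countable_submonoid_closure {M : Type*} [Monoid M] {s : Set M} (hs : s.Countable) :
    (Submonoid.closure s : Set M).Countable := by
  have := hs.to_subtype
  have : Countable (FreeMonoid s) := inferInstanceAs (Countable (List s))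
  rw [Submonoid.closure_eq_mrange, MonoidHom.coe_mrange]
  exact countable_range _

lemma exists_seminorm_sub_le_of_isometry [T2Space E] [LocallyConvexSpace ℝ E]
    (ν : Seminorm ℝ E) (hν : ∀ d r, IsClosed (ν.closedBall d r)) {Q : Set E} (hQ : IsCompact Q)
    (hQc : Convex ℝ Q) {R : ℝ} (hR : ∀ x ∈ Q, ∀ y ∈ Q, ν (x - y) ≤ R)
    (hsep : ∀ O ⊆ Q, O.Countable → ∀ δ > 0, ∃ D ⊆ closure (convexHull ℝ O), D.Countable ∧
      closure (convexHull ℝ O) ⊆ ⋃ d : D, ν.closedBall d δ)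
    {s : Finset (E →ᵃ[ℝ] E)} (hne : s.Nonempty) (hs : ∀ g ∈ s, MapsTo g Q Q)
    (hiso : ∀ g ∈ s, ∀ x y, ν (g x - g y) = ν (x - y)) {x : E} (hxQ : x ∈ Q)
    (hx : ∑ g ∈ s, (g x - x) = 0) {δ : ℝ} (hδ : 0 < δ) :
    ∃ g ∈ s, ν (g x - x) ≤ 4 * δ := by
  let M := Submonoid.closure (s : Set (E →ᵃ[ℝ] E))
  have hMiso {m : E →ᵃ[ℝ] E} (hm : m ∈ M) : ∀ y z, ν (m y - m z) = ν (y - z) := by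
    induction hm using Submonoid.closure_induction with
    | mem g hg => exact hiso g hg
    | one => exact fun _ _ => rfl
    | mul f g _ _ hf hg => exact fun y z => (hf _ _).trans (hg y z)
  have hMQ {m : E →ᵃ[ℝ] E} (hm : m ∈ M) : MapsTo m Q Q := by
    induction hm using Submonoid.closure_induction with
    | mem g hg => exact hs g hg
    | one => exact fun _ hy => hy
    | mul f g _ _ hf hg => exact hf.comp hg
  let O := (fun m : E →ᵃ[ℝ] E => m x) '' M
  have hOQ : O ⊆ Q := image_subset_iff.2 fun m hm => hMQ hm hxQ
  have hPQ : closure (convexHull ℝ O) ⊆ Q :=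
    closure_minimal (convexHull_min hOQ hQc) hQ.isClosed
  obtain ⟨D, hD, hDc, hcover⟩ := hsep O hOQ
    ((countable_submonoid_closure s.countable_toSet).image _) δ hδ
  have := hDc.to_subtype
  obtain ⟨m, hm, g, hg, hle⟩ := exists_seminorm_sub_le_of_sum_eq ν hν (M := M)
    (fun g hg => Submonoid.subset_closure hg) hne hx rfl
    (hQ.of_isClosed_subset isClosed_closure hPQ) hδ
    (fun y hy z hz => hR y (hPQ hy) z (hPQ hz)) (fun d : D => hD d.2) hcover
  exact ⟨g, hg, hMiso hm _ _ ▸ hle⟩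

lemma exists_mem_forall_finset_eq [T2Space E] [LocallyConvexSpace ℝ E] (ν : Seminorm ℝ E)
    (hν : ∀ d r, IsClosed (ν.closedBall d r)) (hν₀ : ∀ x, ν x = 0 → x = 0) {Q : Set E}
    (hQ : IsCompact Q) (hQc : Convex ℝ Q) (hne : Q.Nonempty) {R : ℝ}
    (hR : ∀ x ∈ Q, ∀ y ∈ Q, ν (x - y) ≤ R)
    (hsep : ∀ O ⊆ Q, O.Countable → ∀ δ > 0, ∃ D ⊆ closure (convexHull ℝ O), D.Countable ∧
      closure (convexHull ℝ O) ⊆ ⋃ d : D, ν.closedBall d δ)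
    (s : Finset (E →ᴬ[ℝ] E)) (hs : ∀ g ∈ s, MapsTo g Q Q)
    (hiso : ∀ g ∈ s, ∀ x y, ν (g x - g y) = ν (x - y)) :
    ∃ x ∈ Q, ∀ g ∈ s, g x = x := by
  classical
  obtain ⟨x, hxQ, hx⟩ := exists_mem_sum_sub_eq_zero hQ hQc hne s hs
  refine ⟨x, hxQ, ?_⟩
  by_contra! ⟨g₀, hg₀, hg₀x⟩
  let t : Finset (E →ᵃ[ℝ] E) := (s.filter fun g => g x ≠ x).image (↑)
  have ht {f : E →ᵃ[ℝ] E} : f ∈ t ↔ ∃ g ∈ s, g x ≠ x ∧ (g : E →ᵃ[ℝ] E) = f := by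
    simp [t, and_assoc]
  have htne : t.Nonempty := ⟨g₀, ht.2 ⟨g₀, hg₀, hg₀x, rfl⟩⟩
  have htx : ∑ f ∈ t, (f x - x) = 0 := by
    rw [Finset.sum_image fun _ _ _ _ => ContinuousAffineMap.toAffineMap_injective, ← hx]
    exact Finset.sum_filter_of_ne fun g _ => sub_ne_zero.1
  obtain ⟨f₀, hf₀, hmin⟩ := t.exists_min_image (fun f => ν (f x - x)) htne
  have hpos : 0 < ν (f₀ x - x) := by
    obtain ⟨g, -, hgx, rfl⟩ := ht.1 hf₀
    exact (apply_nonneg ν _).lt_of_ne fun h => hgx (sub_eq_zero.1 (hν₀ _ h.symm))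
  obtain ⟨f, hf, hle⟩ := exists_seminorm_sub_le_of_isometry ν hν hQ hQc hR hsep htne
    (fun f hf => by obtain ⟨g, hg, -, rfl⟩ := ht.1 hf; exact hs g hg)
    (fun f hf => by obtain ⟨g, hg, -, rfl⟩ := ht.1 hf; exact hiso g hg) hxQ htx
    (div_pos hpos (by norm_num : (0 : ℝ) < 5))
  linarith [hmin f hf]

theorem exists_mem_forall_eq_of_seminorm_isometry [T2Space E] [LocallyConvexSpace ℝ E]
    (ν : Seminorm ℝ E) (hν : ∀ d r, IsClosed (ν.closedBall d r)) (hν₀ : ∀ x, ν x = 0 → x = 0)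
    {Q : Set E} (hQ : IsCompact Q) (hQc : Convex ℝ Q) (hne : Q.Nonempty) {R : ℝ}
    (hR : ∀ x ∈ Q, ∀ y ∈ Q, ν (x - y) ≤ R)
    (hsep : ∀ O ⊆ Q, O.Countable → ∀ δ > 0, ∃ D ⊆ closure (convexHull ℝ O), D.Countable ∧
      closure (convexHull ℝ O) ⊆ ⋃ d : D, ν.closedBall d δ)
    (G : Set (E →ᴬ[ℝ] E)) (hG : ∀ g ∈ G, MapsTo g Q Q)
    (hiso : ∀ g ∈ G, ∀ x y, ν (g x - g y) = ν (x - y)) :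
    ∃ x ∈ Q, ∀ g ∈ G, g x = x := by
  obtain ⟨x, hxQ, hx⟩ := hQ.inter_iInter_nonempty (fun g : G => {x | g.1 x = x})
    (fun g => isClosed_eq g.1.continuous continuous_id) fun s => by
      obtain ⟨x, hxQ, hx⟩ := exists_mem_forall_finset_eq ν hν hν₀ hQ hQc hne hR hsep
        (s.map (.subtype _)) (fun g hg => hG g (Finset.property_of_mem_map_subtype s hg))
        (fun g hg => hiso g (Finset.property_of_mem_map_subtype s hg))
      exact ⟨x, hxQ, mem_iInter₂.2 fun g hg => hx g (Finset.mem_map_of_mem _ hg)⟩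
  exact ⟨x, hxQ, fun g hg => mem_iInter.1 hx ⟨g, hg⟩⟩

section WeakSpace

variable {𝕜 V : Type*} [RCLike 𝕜] [NormedAddCommGroup V] [NormedSpace 𝕜 V]

lemma exists_norm_le_of_isCompact_image_toWeakSpace {Q : Set V}
    (hQ : IsCompact (toWeakSpace 𝕜 V '' Q)) : ∃ C, ∀ x ∈ Q, ‖x‖ ≤ C := by
  obtain ⟨C, hC⟩ := banach_steinhaus
    (g := fun x : Q => NormedSpace.inclusionInDoubleDual 𝕜 V x) fun f => by
      have hf : Continuous fun x : WeakSpace 𝕜 V => f ((toWeakSpace 𝕜 V).symm x) :=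
        WeakBilin.eval_continuous _ f
      obtain ⟨C, hC⟩ := (hQ.image hf).isBounded.exists_norm_le
      exact ⟨C, fun x => hC _ ⟨_, ⟨x, x.2, rfl⟩, rfl⟩⟩
  exact ⟨C, fun x hx =>
    ((NormedSpace.inclusionInDoubleDualLi (E := V) 𝕜).norm_map x).symm.trans_le (hC ⟨x, hx⟩)⟩

variable [NormedSpace ℝ V] [IsScalarTower ℝ 𝕜 V]

variable (𝕜) in
lemma isClosed_image_toWeakSpace {s : Set V} (hs : Convex ℝ s) (hc : IsClosed s) :
    IsClosed (toWeakSpace 𝕜 V '' s) := by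
  have h := hs.toWeakSpace_closure 𝕜
  rw [hc.closure_eq] at h
  rw [h]
  exact isClosed_closure

/-- A continuous affine map, seen as a continuous affine map between the underlying real weak
spaces. -/
def weakAffineMap (g : V →ᴬ[𝕜] V) : WeakSpace 𝕜 V →ᴬ[ℝ] WeakSpace 𝕜 V where
  toFun x := toWeakSpace 𝕜 V (g ((toWeakSpace 𝕜 V).symm x))
  linear := (WeakSpace.map g.contLinear).toLinearMap.restrictScalars ℝ
  map_vadd' x v := congrArg (toWeakSpace 𝕜 V) (g.map_vadd _ _)
  cont := by
    have h (x : WeakSpace 𝕜 V) : toWeakSpace 𝕜 V (g ((toWeakSpace 𝕜 V).symm x)) =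
        WeakSpace.map g.contLinear x + toWeakSpace 𝕜 V (g 0) :=
      congrArg (toWeakSpace 𝕜 V) (congrFun g.decomp _)
    simp only [h]
    exact (WeakSpace.map g.contLinear).continuous.add continuous_const

variable (𝕜 V) in
/-- The norm of `V`, as a seminorm on its weak space. -/
def weakNorm : Seminorm ℝ (WeakSpace 𝕜 V) :=
  (normSeminorm ℝ V).comp ((toWeakSpace 𝕜 V).symm.toLinearMap.restrictScalars ℝ)

lemma closedBall_weakNorm (d : WeakSpace 𝕜 V) (r : ℝ) : (weakNorm 𝕜 V).closedBall d r =
    toWeakSpace 𝕜 V '' Metric.closedBall ((toWeakSpace 𝕜 V).symm d) r := by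
  ext x
  rw [LinearEquiv.image_eq_preimage_symm, mem_preimage, mem_closedBall_iff_norm, ← map_sub]
  rfl

lemma exists_countable_subset_iUnion_closedBall_weakNorm {O : Set (WeakSpace 𝕜 V)}
    (hO : O.Countable) {δ : ℝ} (hδ : 0 < δ) :
    ∃ D ⊆ closure (convexHull ℝ O), D.Countable ∧
      closure (convexHull ℝ O) ⊆ ⋃ d : D, (weakNorm 𝕜 V).closedBall d δ := by
  let C : Set V := toWeakSpace 𝕜 V ⁻¹' convexHull ℝ O
  have hC : Convex ℝ C := (convex_convexHull ℝ O).linear_preimage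
    ((toWeakSpace 𝕜 V).toLinearMap.restrictScalars ℝ)
  have hclosure : closure (convexHull ℝ O) = toWeakSpace 𝕜 V '' closure C := by
    rw [hC.toWeakSpace_closure 𝕜, image_preimage_eq _ (toWeakSpace 𝕜 V).surjective]
  let S : Submodule ℝ V := Submodule.span ℝ ((toWeakSpace 𝕜 V).symm '' O)
  have hOS : O ⊆ (toWeakSpace 𝕜 V).symm ⁻¹' S :=
    image_subset_iff.1 (Submodule.subset_span (R := ℝ) (M := V))
  have hCS : C ⊆ S := fun x hx => convexHull_min hOS
    (S.convex.linear_preimage ((toWeakSpace 𝕜 V).symm.toLinearMap.restrictScalars ℝ)) hx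
  have hsep : TopologicalSpace.IsSeparable (closure C) :=
    ((hO.image _).isSeparable.span (R := ℝ)).mono hCS |>.closure
  obtain ⟨D, hDC, hD, hdense⟩ := hsep.exists_countable_dense_subset
  refine ⟨toWeakSpace 𝕜 V '' D, hclosure ▸ image_mono hDC, hD.image _, ?_⟩
  rw [hclosure]
  rintro _ ⟨x, hx, rfl⟩
  obtain ⟨d, hd, hxd⟩ := Metric.mem_closure_iff.1 (hdense hx) δ hδ
  refine mem_iUnion.2 ⟨⟨_, d, hd, rfl⟩, ?_⟩
  rw [closedBall_weakNorm]
  exact ⟨x, hxd.le, rfl⟩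

theorem exists_mem_forall_affineIsometry_eq {Q : Set V} (hQ : IsCompact (toWeakSpace 𝕜 V '' Q))
    (hQc : Convex ℝ Q) (hne : Q.Nonempty) (G : Set (V →ᵃⁱ[𝕜] V)) (hG : ∀ g ∈ G, MapsTo g Q Q) :
    ∃ x ∈ Q, ∀ g ∈ G, g x = x := by
  have : ContinuousSMul ℝ (WeakSpace 𝕜 V) := IsScalarTower.continuousSMul 𝕜
  have : LocallyConvexSpace ℝ (WeakSpace 𝕜 V) := WeakBilin.locallyConvexSpace
  obtain ⟨C, hC⟩ := exists_norm_le_of_isCompact_image_toWeakSpace hQ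
  obtain ⟨_, ⟨x, hx, rfl⟩, hfix⟩ := exists_mem_forall_eq_of_seminorm_isometry (weakNorm 𝕜 V)
    (fun d r => closedBall_weakNorm d r ▸
      isClosed_image_toWeakSpace 𝕜 (convex_closedBall _ _) Metric.isClosed_closedBall)
    (fun x hx => (toWeakSpace 𝕜 V).symm.injective (norm_eq_zero.1 hx)) hQ
    (hQc.linear_image ((toWeakSpace 𝕜 V).toLinearMap.restrictScalars ℝ)) (hne.image _)
    (R := C + C)
    (by
      rintro _ ⟨x, hx, rfl⟩ _ ⟨y, hy, rfl⟩
      exact (norm_sub_le x y).trans (add_le_add (hC x hx) (hC y hy)))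
    (fun O _ hO δ hδ => exists_countable_subset_iUnion_closedBall_weakNorm hO hδ)
    ((fun g : V →ᵃⁱ[𝕜] V => weakAffineMap ⟨g.toAffineMap, g.continuous⟩) '' G)
    (by
      rintro _ ⟨g, hg, rfl⟩ _ ⟨x, hx, rfl⟩
      exact ⟨g x, hG g hg hx, rfl⟩)
    (by
      rintro _ ⟨g, -, rfl⟩ x y
      exact (dist_eq_norm _ _).symm.trans ((g.dist_map _ _).trans (dist_eq_norm _ _)))
  exact ⟨x, hx, fun g hg => (toWeakSpace 𝕜 V).injective (hfix _ ⟨g, hg, rfl⟩)⟩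

end WeakSpace

end RyllNardzewski

section SemiLSummand

open Set Filter Topology

/-- A semi-L-summand in the sense of Lima: every point `c` has a best approximation `v` in `V`
such that the distance from `c` to any point of `V` is attained by passing through `v`. -/
def IsSemiLSummand {E : Type*} [NormedAddCommGroup E] [NormedSpace ℂ E] (V : Submodule ℂ E) :
    Prop :=
  ∀ c : E, ∃ v ∈ V, ∀ a ∈ V, ‖v - a‖ + ‖c - v‖ ≤ ‖c - a‖

lemma IsSemiLSummand.map {E F : Type*} [NormedAddCommGroup E] [NormedSpace ℂ E]
    [NormedAddCommGroup F] [NormedSpace ℂ F] {V : Submodule ℂ E} (hV : IsSemiLSummand V)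
    (e : E ≃ₗᵢ[ℂ] F) : IsSemiLSummand (V.map e.toLinearEquiv.toLinearMap) := by
  intro c
  obtain ⟨v, hv, hle⟩ := hV (e.symm c)
  refine ⟨e v, ⟨v, hv, rfl⟩, ?_⟩
  rintro _ ⟨a, ha, rfl⟩
  have h := hle a ha
  rw [← e.norm_map (v - a), ← e.norm_map (_ - v), ← e.norm_map (_ - a)] at h
  rwa [map_sub, map_sub, map_sub, e.apply_symm_apply] at h

variable {V : Type*} [NormedAddCommGroup V] [NormedSpace ℂ V]

lemma norm_inclDD (x : V) : ‖inclDD V x‖ = ‖x‖ :=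
  (NormedSpace.inclusionInDoubleDualLi (E := V) ℂ).norm_map x

/-- A normed space is semi-L-embedded if its canonical image in the bidual is a
semi-L-summand. -/
def IsSemiLEmbedded (V : Type*) [NormedAddCommGroup V] [NormedSpace ℂ V] : Prop :=
  IsSemiLSummand (E := Dl (Dl V)) (inclDD V).range

/-- The points of the bidual at distance at most `r` from every point of `B`. -/
def bidualCenters (B : Set V) (r : ℝ) : Set (WeakDual ℂ (Dl V)) :=
  ⋂ a ∈ B, WeakDual.toStrongDual ⁻¹' Metric.closedBall (inclDD V a) r

lemma mem_bidualCenters {B : Set V} {r : ℝ} {c : WeakDual ℂ (Dl V)} :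
    c ∈ bidualCenters B r ↔ ∀ a ∈ B, ‖WeakDual.toStrongDual c - inclDD V a‖ ≤ r := by
  simp only [bidualCenters, mem_iInter, mem_preimage, Metric.mem_closedBall]
  exact forall₂_congr fun a _ => by rw [dist_eq_norm (E := Dl (Dl V))]

lemma toWeakDual_inclDD_mem_bidualCenters {B : Set V} {r : ℝ} {x : V} :
    StrongDual.toWeakDual (inclDD V x) ∈ bidualCenters B r ↔ ∀ a ∈ B, ‖x - a‖ ≤ r := by
  rw [mem_bidualCenters]
  refine forall₂_congr fun a _ => ?_
  rw [← norm_inclDD, map_sub]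
  rfl

lemma bidualCenters_mono (B : Set V) : Monotone (bidualCenters B) := fun _ _ h =>
  iInter₂_mono fun _ _ => preimage_mono (Metric.closedBall_subset_closedBall h)

lemma isClosed_bidualCenters (B : Set V) (r : ℝ) : IsClosed (bidualCenters B r) :=
  isClosed_biInter fun _ _ => WeakDual.isClosed_closedBall _ _

lemma isCompact_bidualCenters {B : Set V} (hB : B.Nonempty) (r : ℝ) :
    IsCompact (bidualCenters B r) :=
  (WeakDual.isCompact_closedBall _ r).of_isClosed_subset (isClosed_bidualCenters B r)
    (biInter_subset_of_mem hB.some_mem)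

theorem exists_isLeast_bidualCenters_nonempty {B : Set V} (hB : B.Nonempty)
    (hb : Bornology.IsBounded B) : ∃ ρ, IsLeast {r | (bidualCenters B r).Nonempty} ρ := by
  let S := {r | (bidualCenters B r).Nonempty}
  have hS₀ : S.Nonempty := by
    obtain ⟨R, hR⟩ := hb.exists_norm_le
    refine ⟨R, StrongDual.toWeakDual (inclDD V 0),
      toWeakDual_inclDD_mem_bidualCenters.2 fun a ha => ?_⟩
    simpa only [zero_sub, norm_neg] using hR a ha
  have hS : BddBelow S := ⟨0, fun r ⟨c, hc⟩ =>
    (norm_nonneg (E := Dl (Dl V)) _).trans (mem_bidualCenters.1 hc _ hB.some_mem)⟩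
  obtain ⟨r, hr, hlim, hrS⟩ := exists_seq_tendsto_sInf hS₀ hS
  obtain ⟨c, hc⟩ := IsCompact.nonempty_iInter_of_sequence_nonempty_isCompact_isClosed
    (fun n => bidualCenters B (r n)) (fun n => bidualCenters_mono B (hr n.le_succ)) hrS
    (isCompact_bidualCenters hB _) fun n => isClosed_bidualCenters B _
  exact ⟨sInf S, ⟨c, mem_bidualCenters.2 fun a ha => ge_of_tendsto' hlim fun n =>
    mem_bidualCenters.1 (mem_iInter.1 hc n) a ha⟩, fun r hr => csInf_le hS hr⟩

lemma IsSemiLEmbedded.bidualCenters_subset_range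
    (hV : IsSemiLEmbedded V) {B : Set V} {ρ : ℝ}
    (hρ : ρ ∈ lowerBounds {r | (bidualCenters B r).Nonempty}) :
    bidualCenters B ρ ⊆ range fun x => StrongDual.toWeakDual (inclDD V x) := by
  intro c hc
  obtain ⟨_, ⟨v, rfl⟩, hv⟩ := hV (WeakDual.toStrongDual c)
  set d := WeakDual.toStrongDual c - inclDD V v
  have hmem : StrongDual.toWeakDual (inclDD V v) ∈ bidualCenters B (ρ - ‖d‖) := by
    refine toWeakDual_inclDD_mem_bidualCenters.2 fun a ha => le_sub_iff_add_le.2 ?_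
    rw [← norm_inclDD, map_sub]
    exact (hv _ ⟨a, rfl⟩).trans (mem_bidualCenters.1 hc a ha)
  have hle := hρ ⟨_, hmem⟩
  have h₀ : d = 0 := norm_le_zero_iff (E := Dl (Dl V)) |>.1 (by linarith)
  exact ⟨v, (sub_eq_zero.1 h₀).symm⟩

theorem IsSemiLEmbedded.exists_forall_affineIsometry_eq
    (hV : IsSemiLEmbedded V) (G : Set (V →ᵃⁱ[ℂ] V))
    {B : Set V} (hB : B.Nonempty) (hb : Bornology.IsBounded B) (hG : ∀ g ∈ G, B ⊆ g '' B) :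
    ∃ x, ∀ g ∈ G, g x = x := by
  obtain ⟨ρ, ⟨c, hc⟩, hρ⟩ := exists_isLeast_bidualCenters_nonempty hB hb
  let C : Set V := {x | ∀ a ∈ B, ‖x - a‖ ≤ ρ}
  have hC : NormedSpace.inclusionInDoubleDualWeak ℂ V '' (toWeakSpace ℂ V '' C) =
      bidualCenters B ρ := by
    rw [image_image]
    refine Subset.antisymm (image_subset_iff.2 fun x hx =>
      toWeakDual_inclDD_mem_bidualCenters.2 hx) fun c hc => ?_
    obtain ⟨x, rfl⟩ := hV.bidualCenters_subset_range hρ hc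
    exact ⟨x, toWeakDual_inclDD_mem_bidualCenters.1 hc, rfl⟩
  have hcomp : IsCompact (toWeakSpace ℂ V '' C) := by
    rw [(NormedSpace.isEmbedding_inclusionInDoubleDualWeak ℂ V).isCompact_iff, hC]
    exact isCompact_bidualCenters hB ρ
  have hconv : Convex ℝ C := by
    have : C = ⋂ a ∈ B, Metric.closedBall a ρ := by
      ext x
      simp only [C, mem_ofPred_eq, mem_iInter, mem_closedBall_iff_norm]
    exact this ▸ convex_iInter₂ fun a _ => convex_closedBall a ρ
  have hne : C.Nonempty := by
    rw [← image_nonempty, ← image_nonempty, hC]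
    exact ⟨c, hc⟩
  obtain ⟨x, -, hx⟩ := exists_mem_forall_affineIsometry_eq hcomp hconv hne G
    fun g hg x hx a ha => by
      obtain ⟨b, hb, rfl⟩ := hG g hg ha
      rw [← dist_eq_norm, g.dist_map, dist_eq_norm]
      exact hx b hb
  exact ⟨x, hx⟩

end SemiLSummand

section VectorFunctional

open scoped InnerProductSpace ComplexOrder

section Order

variable {M : Type*} [CStarAlgebra M] [PartialOrder M] [StarOrderedRing M]

lemma star_mul_self_convexComb_le (x y : M) {s t : ℝ} (hs : 0 ≤ s) (ht : 0 ≤ t) (hst : s + t = 1) :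
    star (s • x + t • y) * (s • x + t • y) ≤ s • (star x * x) + t • (star y * y) := by
  have hdefect : s • (star x * x) + t • (star y * y) - star (s • x + t • y) * (s • x + t • y) =
      (s * t) • (star (x - y) * (x - y)) := by
    obtain rfl : t = 1 - s := by linarith
    simp only [star_add, star_smul, star_sub, star_trivial, add_mul, mul_add, sub_mul, mul_sub,
      smul_mul_assoc, mul_smul_comm, smul_smul, smul_add]
    module
  rw [← sub_nonneg, hdefect]
  exact smul_nonneg (mul_nonneg hs ht) (star_mul_self_nonneg _)

lemma convex_exists_star_mul_self_le {K : Set M} (hK : Convex ℝ K) :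
    Convex ℝ {a : M | ∃ x ∈ K, star x * x ≤ a} := by
  rintro a ⟨x, hxK, hxa⟩ b ⟨y, hyK, hyb⟩ s t hs ht hst
  exact ⟨s • x + t • y, hK hxK hyK hs ht hst, (star_mul_self_convexComb_le x y hs ht hst).trans <|
    add_le_add (smul_le_smul_of_nonneg_left hxa hs) (smul_le_smul_of_nonneg_left hyb ht)⟩

lemma exists_positiveLinearMap_eq_re (ψ : M →L[ℂ] ℂ) (hψ : ∀ a, 0 ≤ a → 0 ≤ (ψ a).re) :
    ∃ φ : M →ₚ[ℂ] ℂ, ∀ a, IsSelfAdjoint a → φ a = (ψ a).re := by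
  let φ : M →ₗ[ℂ] ℂ :=
    { toFun := fun a => (ψ a + star (ψ (star a))) / 2
      map_add' := fun a b => by simp only [map_add, star_add]; ring
      map_smul' := fun c a => by
        simp only [star_smul, map_smul, smul_eq_mul, star_mul', star_star, RingHom.id_apply]; ring }
  have hφ (a : M) (ha : IsSelfAdjoint a) : φ a = (ψ a).re := by
    change (ψ a + star (ψ (star a))) / 2 = _
    rw [ha.star_eq, Complex.star_def, Complex.add_conj]
    push_cast
    ring
  refine ⟨PositiveLinearMap.mk₀ φ fun a ha => ?_, hφ⟩
  rw [hφ a (.of_nonneg ha), Complex.zero_le_real]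
  exact hψ a ha

lemma exists_re_le_sq_norm_and_one_le_re {f : M →L[ℂ] ℂ} (hf : f ≠ 0) :
    ∃ ψ : M →L[ℂ] ℂ, (ψ 1).re ≤ ‖f‖ ^ 2 ∧
      ∀ a, (∃ x, 1 ≤ (f x).re ∧ star x * x ≤ a) → 1 ≤ (ψ a).re := by
  have : 0 < ‖f‖ := norm_pos_iff.mpr hf
  have : Nontrivial M := by
    obtain ⟨x, hx⟩ := DFunLike.ne_iff.mp hf
    exact ⟨x, 0, fun h => hx (by simp [h])⟩
  have hdisj : Disjoint (Metric.ball 0 (‖f‖ ^ 2)⁻¹)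
      {a : M | ∃ x, 1 ≤ (f x).re ∧ star x * x ≤ a} := by
    refine Set.disjoint_left.mpr fun a ha ⟨x, hfx, hxa⟩ => (mem_ball_zero_iff.mp ha).not_ge ?_
    have hx : 1 ≤ ‖f‖ * ‖x‖ := hfx.trans <| (Complex.re_le_norm _).trans (f.le_opNorm x)
    calc (‖f‖ ^ 2)⁻¹ ≤ ‖x‖ * ‖x‖ := by
          rw [inv_le_iff_one_le_mul₀' (by positivity)]
          nlinarith
      _ = ‖star x * x‖ := CStarRing.norm_star_mul_self.symm
      _ ≤ ‖a‖ := CStarAlgebra.norm_le_norm_of_nonneg_of_le (star_mul_self_nonneg x) hxa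
  have hconv : Convex ℝ {a : M | ∃ x, 1 ≤ (f x).re ∧ star x * x ≤ a} :=
    convex_exists_star_mul_self_le <|
      convex_halfSpace_ge (Complex.reLm.comp (f.toLinearMap.restrictScalars ℝ)).isLinear 1
  obtain ⟨ψ, s, hball, hC⟩ := RCLike.geometric_hahn_banach_open (𝕜 := ℂ)
    (convex_ball (0 : M) (‖f‖ ^ 2)⁻¹) Metric.isOpen_ball hconv hdisj
  have hs : 0 < s := by simpa using hball 0 (Metric.mem_ball_self (by positivity))
  have hone : (ψ ((‖f‖ ^ 2)⁻¹ • (1 : M))).re ≤ s := by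
    refine closure_minimal (s := Metric.ball (0 : M) (‖f‖ ^ 2)⁻¹) (t := {a | (ψ a).re ≤ s})
      (fun a ha => (hball a ha).le) (isClosed_le (by fun_prop) continuous_const) ?_
    rw [closure_ball _ (by positivity), mem_closedBall_zero_iff, norm_smul, CStarRing.norm_one,
      mul_one, Real.norm_of_nonneg (by positivity)]
  refine ⟨s⁻¹ • ψ, ?_, fun a ha => ?_⟩
  · rw [map_smul_of_tower, Complex.real_smul, Complex.re_ofReal_mul,
      inv_mul_le_iff₀ (by positivity)] at hone
    simpa [inv_mul_le_iff₀ hs, mul_comm] using hone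
  · simpa [le_inv_mul_iff₀ hs] using hC a ha

theorem exists_positiveLinearMap_sq_norm_le (f : M →L[ℂ] ℂ) :
    ∃ φ : M →ₚ[ℂ] ℂ, (φ 1).re ≤ ‖f‖ ^ 2 ∧ ∀ x, ‖f x‖ ^ 2 ≤ (φ (star x * x)).re := by
  obtain rfl | hf := eq_or_ne f 0
  · exact ⟨0, by simp⟩
  obtain ⟨ψ, hψ1, hψ⟩ := exists_re_le_sq_norm_and_one_le_re hf
  have hlower {x : M} (hx : f x ≠ 0) : ‖f x‖ ^ 2 ≤ (ψ (star x * x)).re := by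
    have h1 := hψ _ ⟨(f x)⁻¹ • x, by simp [hx], le_rfl⟩
    have h2 : star ((f x)⁻¹ • x) * ((f x)⁻¹ • x) = (‖f x‖ ^ 2)⁻¹ • (star x * x) := by
      rw [star_smul, smul_mul_smul_comm, star_inv₀, ← mul_inv, Complex.star_def, Complex.conj_mul',
        ← Complex.coe_smul, Complex.ofReal_inv, Complex.ofReal_pow]
    rw [h2, map_smul_of_tower, Complex.real_smul, Complex.re_ofReal_mul,
      le_inv_mul_iff₀ (by positivity)] at h1
    simpa using h1
  have hnonneg (b : M) (hb : 0 ≤ b) : 0 ≤ (ψ b).re := by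
    obtain ⟨x, hx⟩ := DFunLike.ne_iff.mp hf
    set c := star ((f x)⁻¹ • x) * ((f x)⁻¹ • x)
    have hray (t : ℝ) (ht : 0 ≤ t) : 1 ≤ (ψ c).re + t * (ψ b).re := by
      have := hψ (c + t • b) ⟨(f x)⁻¹ • x,
        by rw [map_smul, smul_eq_mul, inv_mul_cancel₀ hx, Complex.one_re],
        le_add_of_nonneg_right (smul_nonneg ht hb)⟩
      simpa using this
    have hstart : 1 ≤ (ψ c).re := by simpa using hray 0 le_rfl
    by_contra! hneg
    have hzero := hray ((ψ c).re / -(ψ b).re) (div_nonneg (by linarith) (by linarith))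
    rw [div_neg, neg_mul, div_mul_cancel₀ _ hneg.ne] at hzero
    linarith
  obtain ⟨φ, hφ⟩ := exists_positiveLinearMap_eq_re ψ hnonneg
  refine ⟨φ, by simpa [hφ 1 (.one M)] using hψ1, fun x => ?_⟩
  by_cases hx : f x = 0
  · simpa [hx] using (Complex.nonneg_iff.mp (map_nonneg φ (star_mul_self_nonneg x))).1
  · simpa [hφ _ (.star_mul_self x)] using hlower hx

end Order

/-- A `*`-representation of a C⋆-algebra on a Hilbert space, possibly degenerate. -/
structure StarRep (N : Type u) [NonUnitalCStarAlgebra N] where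
  /-- The representation space. -/
  H : Type u
  [normedAddCommGroup : NormedAddCommGroup H]
  [innerProductSpace : InnerProductSpace ℂ H]
  [completeSpace : CompleteSpace H]
  /-- The action by bounded operators. -/
  π : N →⋆ₙₐ[ℂ] H →L[ℂ] H

namespace StarRep

attribute [instance] normedAddCommGroup innerProductSpace completeSpace

variable {N : Type u} [NonUnitalCStarAlgebra N] (ρ : StarRep N)

/-- The action of a `*`-representation as a bounded linear map. -/
def πL : N →L[ℂ] ρ.H →L[ℂ] ρ.H :=
  (ρ.π : N →ₗ[ℂ] ρ.H →L[ℂ] ρ.H).mkContinuous 1 fun x => by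
    simpa using NonUnitalStarAlgHom.norm_apply_le ρ.π x

/-- The coefficient functional `x ↦ ⟪η, π x ξ⟫`, sesquilinear in `(η, ξ)`. -/
def coef : ρ.H →L⋆[ℂ] ρ.H →L[ℂ] Dl N :=
  (compL ℂ N ρ.H ℂ).bilinearComp (innerSL ℂ) ρ.πL.flip

lemma coef_apply (η ξ : ρ.H) (x : N) : ρ.coef η ξ x = ⟪η, ρ.π x ξ⟫_ℂ := rfl

lemma norm_coef_le (η ξ : ρ.H) : ‖ρ.coef η ξ‖ ≤ ‖η‖ * ‖ξ‖ :=
  ContinuousLinearMap.opNorm_le_bound _ (by positivity) fun x => by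
    calc ‖⟪η, ρ.π x ξ⟫_ℂ‖ ≤ ‖η‖ * (‖ρ.π x‖ * ‖ξ‖) :=
          (norm_inner_le_norm _ _).trans (by gcongr; exact (ρ.π x).le_opNorm ξ)
      _ ≤ ‖η‖ * (‖x‖ * ‖ξ‖) := by gcongr; exact NonUnitalStarAlgHom.norm_apply_le ρ.π x
      _ = ‖η‖ * ‖ξ‖ * ‖x‖ := by ring

end StarRep

lemma exists_inner_coe_eq_norm_le {E : Type*} [SeminormedAddCommGroup E] [InnerProductSpace ℂ E]
    (g : E →L[ℂ] ℂ) : ∃ η : UniformSpace.Completion E,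
      ‖η‖ ≤ ‖g‖ ∧ ∀ x : E, ⟪η, (x : UniformSpace.Completion E)⟫_ℂ = g x := by
  let G : UniformSpace.Completion E →L[ℂ] ℂ := g.extend UniformSpace.Completion.toComplL
  have hG (x : E) : G x = g x :=
    ContinuousLinearMap.extend_eq _ UniformSpace.Completion.denseRange_coe
      (UniformSpace.Completion.isUniformInducing_coe _) x
  refine ⟨(InnerProductSpace.toDual ℂ _).symm G, ?_, fun x => ?_⟩
  · rw [LinearIsometryEquiv.norm_map]
    refine G.opNorm_le_bound (norm_nonneg g) fun x => ?_
    induction x using UniformSpace.Completion.induction_on with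
    | hp => exact isClosed_le (by fun_prop) (by fun_prop)
    | ih x => rw [hG, UniformSpace.Completion.norm_coe]; exact g.le_opNorm x
  · rw [InnerProductSpace.toDual_symm_apply, hG]

lemma exists_eq_coef_of_cstarAlgebra {M : Type u} [CStarAlgebra M] (f : Dl M) :
    ∃ (ρ : StarRep M) (η ξ : ρ.H), f = ρ.coef η ξ ∧ ‖η‖ * ‖ξ‖ ≤ ‖f‖ := by
  let _ := CStarAlgebra.spectralOrder M
  have _ := CStarAlgebra.spectralOrderedRing M
  obtain ⟨φ, hφ1, hφ⟩ := exists_positiveLinearMap_sq_norm_le f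
  let g : φ.PreGNS →L[ℂ] ℂ := (f.toLinearMap ∘ₗ φ.ofPreGNS.toLinearMap).mkContinuous 1 fun x => by
    rw [one_mul, PositiveLinearMap.preGNS_norm_def]
    exact Real.le_sqrt_of_sq_le (hφ _)
  obtain ⟨η, hη, hηg⟩ := exists_inner_coe_eq_norm_le g
  refine ⟨⟨φ.GNS, φ.gnsNonUnitalStarAlgHom⟩, η, (φ.toPreGNS 1 : φ.PreGNS), ?_, ?_⟩
  · ext x
    rw [StarRep.coef_apply, PositiveLinearMap.gnsNonUnitalStarAlgHom_apply_coe, hηg]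
    simp [g]
  · have hξ : ‖((φ.toPreGNS 1 : φ.PreGNS) : φ.GNS)‖ ≤ ‖f‖ := by
      rw [UniformSpace.Completion.norm_coe, PositiveLinearMap.preGNS_norm_def]
      exact (Real.sqrt_le_left (norm_nonneg f)).mpr (by simpa using hφ1)
    calc _ ≤ 1 * ‖f‖ := by
          gcongr
          exact hη.trans (LinearMap.mkContinuous_norm_le _ zero_le_one _)
      _ = ‖f‖ := one_mul _

lemma exists_comp_linearIsometry_eq_norm_eq {E F : Type*} [NormedAddCommGroup E] [NormedSpace ℂ E]
    [NormedAddCommGroup F] [NormedSpace ℂ F] (ι : E →ₗᵢ[ℂ] F) (f : E →L[ℂ] ℂ) :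
    ∃ g : F →L[ℂ] ℂ, g.comp ι.toContinuousLinearMap = f ∧ ‖g‖ = ‖f‖ := by
  obtain ⟨g, hg, hgn⟩ := exists_extension_norm_eq ι.range
    (f.comp (ι.equivRange.symm : ι.range →L[ℂ] E))
  rw [ContinuousLinearMap.opNorm_comp_linearIsometryEquiv] at hgn
  refine ⟨g, ?_, hgn⟩
  ext x
  simpa using hg (ι.equivRange x)

theorem exists_eq_coef {N : Type u} [NonUnitalCStarAlgebra N] (f : Dl N) :
    ∃ (ρ : StarRep N) (η ξ : ρ.H), f = ρ.coef η ξ ∧ ‖η‖ * ‖ξ‖ ≤ ‖f‖ := by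
  obtain ⟨g, rfl, hg⟩ := exists_comp_linearIsometry_eq_norm_eq
    ⟨(Unitization.inrNonUnitalStarAlgHom ℂ N : N →ₗ[ℂ] Unitization ℂ N), Unitization.norm_inr⟩ f
  obtain ⟨ρ, η, ξ, rfl, hn⟩ := exists_eq_coef_of_cstarAlgebra g
  exact ⟨⟨ρ.H, ρ.π.comp (Unitization.inrNonUnitalStarAlgHom ℂ N)⟩, η, ξ, rfl, hn.trans_eq hg⟩

end VectorFunctional

section ShermanTakeda

open scoped InnerProductSpace ENNReal

/-- The conjugate `f ↦ conj ∘ f ∘ s` of functionals by a conjugate-linear map `s`; for `s` the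
involution of a C⋆-algebra this is the involution of its dual. -/
def conjDual {X : Type*} [NormedAddCommGroup X] [NormedSpace ℂ X] (s : X →L⋆[ℂ] X) :
    (X →L[ℂ] ℂ) →L⋆[ℂ] X →L[ℂ] ℂ :=
  (compSL X ℂ ℂ (starRingEnd ℂ) (starRingEnd ℂ) ((starL ℂ : ℂ ≃L⋆[ℂ] ℂ) : ℂ →L⋆[ℂ] ℂ)).comp
    ((compSL X X ℂ (starRingEnd ℂ) (RingHom.id ℂ)).flip s)

lemma conjDual_apply {X : Type*} [NormedAddCommGroup X] [NormedSpace ℂ X] (s : X →L⋆[ℂ] X)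
    (f : X →L[ℂ] ℂ) (x : X) : conjDual s f x = star (f (s x)) := rfl

namespace StarRep

variable {N : Type u} [NonUnitalCStarAlgebra N] (ρ : StarRep N)

lemma coef_comp_mul (η ξ : ρ.H) (x : N) :
    (ρ.coef η ξ).comp (ContinuousLinearMap.mul ℂ N x) = ρ.coef (ρ.π (star x) η) ξ := by
  ext y
  simp [coef_apply, map_star, star_eq_adjoint, adjoint_inner_left]

lemma conjDual_coef (η ξ : ρ.H) :
    conjDual ((starL ℂ : N ≃L⋆[ℂ] N) : N →L⋆[ℂ] N) (ρ.coef η ξ) = ρ.coef ξ η := by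
  ext x
  simp [conjDual_apply, coef_apply, map_star, star_eq_adjoint, adjoint_inner_right]

/-- The extension of a representation to the bidual, with the Arens product; its coefficients are
`F ↦ F (ρ.coef η ξ)`, see `inner_bidualExt`. -/
def bidualExt : Dl (Dl N) →ₗ[ℂ] ρ.H →L[ℂ] ρ.H where
  toFun F :=
    adjoint (InnerProductSpace.continuousLinearMapOfBilin ((compL ℂ ρ.H (Dl N) ℂ F).comp ρ.coef))
  map_add' F G := by
    refine ContinuousLinearMap.ext fun ξ => ext_inner_left ℂ fun η => ?_
    simp [adjoint_inner_right, inner_add_right]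
  map_smul' c F := by
    refine ContinuousLinearMap.ext fun ξ => ext_inner_left ℂ fun η => ?_
    simp [adjoint_inner_right, inner_smul_right]

lemma inner_bidualExt (F : Dl (Dl N)) (η ξ : ρ.H) :
    ⟪η, ρ.bidualExt F ξ⟫_ℂ = F (ρ.coef η ξ) :=
  (adjoint_inner_right _ _ _).trans (InnerProductSpace.continuousLinearMapOfBilin_apply _ _ _)

lemma norm_bidualExt_le (F : Dl (Dl N)) : ‖ρ.bidualExt F‖ ≤ ‖F‖ := by
  refine opNorm_le_of_re_inner_le (norm_nonneg F) fun ξ η hξ hη => ?_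
  calc RCLike.re ⟪ρ.bidualExt F ξ, η⟫_ℂ ≤ ‖F (ρ.coef η ξ)‖ := by
        rw [← inner_bidualExt, norm_inner_symm]
        exact RCLike.re_le_norm _
    _ ≤ ‖F‖ * (‖η‖ * ‖ξ‖) := F.le_opNorm_of_le (ρ.norm_coef_le η ξ)
    _ = ‖F‖ := by rw [hξ, hη, mul_one, mul_one]

lemma arT_mul_coef (G : Dl (Dl N)) (η ξ : ρ.H) :
    arT (ContinuousLinearMap.mul ℂ N) G (ρ.coef η ξ) = ρ.coef η (ρ.bidualExt G ξ) := by
  ext x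
  rw [arT_apply, coef_comp_mul, ← inner_bidualExt, map_star, star_eq_adjoint, adjoint_inner_left,
    coef_apply]

lemma bidualExt_arensMul (F G : Dl (Dl N)) :
    ρ.bidualExt (arensMul N F G) = ρ.bidualExt F * ρ.bidualExt G := by
  ext ξ
  refine ext_inner_left ℂ fun η => ?_
  rw [inner_bidualExt, arensMul, arExt_apply, arT_mul_coef, ← inner_bidualExt]
  rfl

lemma bidualExt_conjDual (F : Dl (Dl N)) :
    ρ.bidualExt (conjDual (conjDual ((starL ℂ : N ≃L⋆[ℂ] N) : N →L⋆[ℂ] N)) F) =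
      star (ρ.bidualExt F) := by
  ext ξ
  refine ext_inner_left ℂ fun η => ?_
  rw [inner_bidualExt, conjDual_apply, conjDual_coef, ← inner_bidualExt, star_eq_adjoint,
    adjoint_inner_right, Complex.star_def, inner_conj_symm]

end StarRep

lemma exists_arensMul_apply_eq {N : Type u} [NonUnitalCStarAlgebra N] (F : Dl (Dl N)) (f : Dl N) :
    ∃ w : Dl N, ∀ G, arensMul N F G f = G w := by
  obtain ⟨ρ, η, ξ, rfl, -⟩ := exists_eq_coef f
  refine ⟨ρ.coef (adjoint (ρ.bidualExt F) η) ξ, fun G => ?_⟩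
  rw [← ρ.inner_bidualExt, ← ρ.inner_bidualExt, ρ.bidualExt_arensMul, adjoint_inner_left]
  rfl

universe v in
lemma exists_nonUnitalCStarAlgebra_of_linearIsometry {X : Type*} {L : Type v}
    [NormedAddCommGroup X] [NormedSpace ℂ X] [CompleteSpace X] [NonUnitalCStarAlgebra L]
    (T : X →ₗᵢ[ℂ] L) (m : X → X → X) (s : X → X)
    (hm : ∀ F G, T (m F G) = T F * T G) (hs : ∀ F, T (s F) = star (T F)) :
    ∃ (M : Type v) (_ : NonUnitalCStarAlgebra M) (Θ : X ≃ₗᵢ[ℂ] M),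
      ∀ F G, Θ (m F G) = Θ F * Θ G := by
  let S : NonUnitalStarSubalgebra ℂ L :=
    { T.range with
      mul_mem' := by rintro _ _ ⟨F, rfl⟩ ⟨G, rfl⟩; exact ⟨m F G, hm F G⟩
      star_mem' := by rintro _ ⟨F, rfl⟩; exact ⟨s F, hs F⟩ }
  have : IsClosed (S : Set L) := T.isometry.isClosedEmbedding.isClosed_range
  exact ⟨S, inferInstance, T.equivRange, fun F G => Subtype.ext (hm F G)⟩

lemma exists_nonUnitalCStarAlgebra_of_family {X ι : Type u} [NormedAddCommGroup X]
    [NormedSpace ℂ X] [CompleteSpace X] {B : ι → Type u} [∀ i, NonUnitalCStarAlgebra (B i)]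
    (T : ∀ i, X →ₗ[ℂ] B i) (m : X → X → X) (s : X → X)
    (hm : ∀ i F G, T i (m F G) = T i F * T i G) (hs : ∀ i F, T i (s F) = star (T i F))
    (hT : ∀ F C, 0 ≤ C → ((∀ i, ‖T i F‖ ≤ C) ↔ ‖F‖ ≤ C)) :
    ∃ (M : Type u) (_ : NonUnitalCStarAlgebra M) (Θ : X ≃ₗᵢ[ℂ] M),
      ∀ F G, Θ (m F G) = Θ F * Θ G := by
  have hle (F : X) (i : ι) : ‖T i F‖ ≤ ‖F‖ := (hT F _ (norm_nonneg F)).mpr le_rfl i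
  let U (F : X) : lp B ∞ := ⟨fun i => T i F, memℓp_infty ⟨‖F‖, by rintro _ ⟨i, rfl⟩; exact hle F i⟩⟩
  let V : X →ₗᵢ[ℂ] lp B ∞ :=
    { toFun := U
      map_add' := fun F G => lp.ext (funext fun i => map_add (T i) F G)
      map_smul' := fun c F => lp.ext (funext fun i => map_smul (T i) c F)
      norm_map' := fun F => le_antisymm (lp.norm_le_of_forall_le (norm_nonneg F) (hle F))
        ((hT F _ (norm_nonneg (U F))).mp (lp.norm_apply_le_norm ENNReal.top_ne_zero (U F))) }
  exact exists_nonUnitalCStarAlgebra_of_linearIsometry V m s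
    (fun F G => lp.ext (funext fun i => hm i F G)) fun F => lp.ext (funext fun i => hs i F)

/-- The **Sherman–Takeda theorem**. -/
theorem exists_bidual_equiv_nonUnitalCStarAlgebra (N : Type u) [NonUnitalCStarAlgebra N] :
    ∃ (M : Type u) (_ : NonUnitalCStarAlgebra M) (Θ : Dl (Dl N) ≃ₗᵢ[ℂ] M),
      ∀ F G, Θ (arensMul N F G) = Θ F * Θ G := by
  choose ρ η ξ hf hn using exists_eq_coef (N := N)
  refine exists_nonUnitalCStarAlgebra_of_family (fun f => (ρ f).bidualExt)
    (fun F G => arensMul N F G) (conjDual (conjDual ((starL ℂ : N ≃L⋆[ℂ] N) : N →L⋆[ℂ] N)))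
    (fun f => (ρ f).bidualExt_arensMul) (fun f => (ρ f).bidualExt_conjDual)
    fun F C hC => ⟨fun h => ?_, fun h f => ?_⟩
  · refine F.opNorm_le_bound hC fun f => ?_
    calc ‖F f‖ = ‖⟪η f, (ρ f).bidualExt F (ξ f)⟫_ℂ‖ := by rw [StarRep.inner_bidualExt, ← hf]
      _ ≤ ‖η f‖ * (C * ‖ξ f‖) := (norm_inner_le_norm _ _).trans <| by
          gcongr; exact ContinuousLinearMap.le_of_opNorm_le _ (h f) _
      _ = C * (‖η f‖ * ‖ξ f‖) := by ring
      _ ≤ C * ‖f‖ := by gcongr; exact hn f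
  · exact ((ρ f).norm_bidualExt_le F).trans h

end ShermanTakeda

section TranslationInvariant

open scoped InnerProductSpace

/-- A space of functionals is translation invariant if it is stable under `v ↦ v (z * ·)` and
`v ↦ v (· * z)`. -/
structure IsTranslationInvariant {N : Type u} [NonUnitalCStarAlgebra N]
    (V : Submodule ℂ (Dl N)) : Prop where
  comp_mul_mem : ∀ v ∈ V, ∀ z, v.comp (ContinuousLinearMap.mul ℂ N z) ∈ V
  comp_mul_flip_mem : ∀ v ∈ V, ∀ z, v.comp ((ContinuousLinearMap.mul ℂ N).flip z) ∈ V

namespace StarRep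

variable {N : Type u} [NonUnitalCStarAlgebra N] (ρ : StarRep N) {V : Submodule ℂ (Dl N)}

lemma coef_comp_mul_flip (η ξ : ρ.H) (x : N) :
    (ρ.coef η ξ).comp ((ContinuousLinearMap.mul ℂ N).flip x) = ρ.coef η (ρ.π x ξ) := by
  ext y
  simp [coef_apply]

lemma starProjection_π_apply (K : Submodule ℂ ρ.H) [K.HasOrthogonalProjection]
    (hK : ∀ x, ∀ ξ ∈ K, ρ.π x ξ ∈ K) (x : N) (ξ : ρ.H) :
    K.starProjection (ρ.π x ξ) = ρ.π x (K.starProjection ξ) := by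
  refine Submodule.eq_starProjection_of_mem_of_inner_eq_zero
    (hK x _ (Submodule.starProjection_apply_mem K ξ)) fun w hw => ?_
  rw [← map_sub, ← adjoint_inner_right, ← star_eq_adjoint, ← map_star]
  exact Submodule.starProjection_inner_eq_zero ξ _ (hK _ _ hw)

lemma coef_starProjection (K : Submodule ℂ ρ.H) [K.HasOrthogonalProjection]
    (hK : ∀ x, ∀ ξ ∈ K, ρ.π x ξ ∈ K) (η ξ : ρ.H) :
    ρ.coef (K.starProjection η) ξ = ρ.coef η (K.starProjection ξ) := by
  ext x
  rw [coef_apply, coef_apply, ← ρ.starProjection_π_apply K hK]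
  exact Submodule.inner_starProjection_left_eq_right K _ _

/-- The vectors `ξ` all of whose coefficients `ρ.coef ζ ξ` lie in `V`. -/
def vectorsInto (V : Submodule ℂ (Dl N)) : Submodule ℂ ρ.H :=
  ⨅ ζ, V.comap (ρ.coef ζ : ρ.H →ₗ[ℂ] Dl N)

lemma mem_vectorsInto {ξ : ρ.H} : ξ ∈ ρ.vectorsInto V ↔ ∀ ζ, ρ.coef ζ ξ ∈ V := by
  simp [vectorsInto]

lemma isClosed_vectorsInto (hV : IsClosed (V : Set (Dl N))) :
    IsClosed (ρ.vectorsInto V : Set ρ.H) := by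
  simp only [vectorsInto, Submodule.coe_iInf]
  exact isClosed_iInter fun ζ => hV.preimage (ρ.coef ζ).continuous

lemma π_mem_vectorsInto (hV : IsTranslationInvariant V) (x : N) :
    ∀ ξ ∈ ρ.vectorsInto V, ρ.π x ξ ∈ ρ.vectorsInto V := fun ξ hξ => by
  rw [mem_vectorsInto] at hξ ⊢
  intro ζ
  rw [← coef_comp_mul_flip]
  exact hV.comp_mul_flip_mem _ (hξ ζ) x

lemma coef_eq_zero_of_mem (hVc : IsClosed (V : Set (Dl N))) (hV : IsTranslationInvariant V)
    {η ξ : ρ.H} (hξ : ξ ∈ (ρ.vectorsInto V)ᗮ) (h : ρ.coef η ξ ∈ V) : ρ.coef η ξ = 0 := by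
  let Z : Submodule ℂ ρ.H := V.comap (ρ.coef.flip ξ : ρ.H →ₗ⋆[ℂ] Dl N)
  have : CompleteSpace Z := (hVc.preimage (ρ.coef.flip ξ).continuous).completeSpace_coe
  have hZ (x : N) (ζ : ρ.H) (hζ : ζ ∈ Z) : ρ.π x ζ ∈ Z := by
    have := hV.comp_mul_mem _ hζ (star x)
    simpa [coef_comp_mul, Z] using this
  have hPξ : Z.starProjection ξ ∈ ρ.vectorsInto V := ρ.mem_vectorsInto.mpr fun ζ => by
    rw [← ρ.coef_starProjection Z hZ]
    exact Submodule.starProjection_apply_mem Z ζ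
  have hPξ0 : Z.starProjection ξ = 0 := by
    rw [← norm_eq_zero, ← sq_eq_zero_iff, Submodule.starProjection_apply, ← Submodule.coe_norm,
      ← Submodule.re_inner_starProjection_eq_normSq, hξ _ hPξ, map_zero]
  have hPη : Z.starProjection η = η := Submodule.starProjection_eq_self_iff.mpr h
  rw [← hPη, ρ.coef_starProjection Z hZ, hPξ0, map_zero]

/-- The direct sum of two representations. -/
abbrev prod (σ : StarRep N) : StarRep N where
  H := WithLp 2 (ρ.H × σ.H)
  π :=
    { toFun x :=
        ((WithLp.prodContinuousLinearEquiv 2 ℂ ρ.H σ.H).symm : _ →L[ℂ] _) ∘L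
          (ρ.π x).prodMap (σ.π x) ∘L (WithLp.prodContinuousLinearEquiv 2 ℂ ρ.H σ.H : _ →L[ℂ] _)
      map_smul' c x := ContinuousLinearMap.ext fun w => WithLp.ofLp_injective 2 (by ext <;> simp)
      map_zero' := ContinuousLinearMap.ext fun w => WithLp.ofLp_injective 2 (by ext <;> simp)
      map_add' x y := ContinuousLinearMap.ext fun w => WithLp.ofLp_injective 2 (by ext <;> simp)
      map_mul' x y := ContinuousLinearMap.ext fun w => WithLp.ofLp_injective 2 (by ext <;> simp)
      map_star' x := by
        refine (eq_adjoint_iff _ _).mpr fun w w' => ?_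
        simp [map_star, star_eq_adjoint, adjoint_inner_left] }

lemma coef_prod (σ : StarRep N) (w w' : (ρ.prod σ).H) :
    (ρ.prod σ).coef w w' = ρ.coef w.fst w'.fst + σ.coef w.snd w'.snd := rfl

lemma coef_eq_of_sub_mem (hVc : IsClosed (V : Set (Dl N))) (hV : IsTranslationInvariant V)
    (σ : StarRep N) {η ξ : ρ.H} {η' ξ' : σ.H} (hξ : ξ ∈ (ρ.vectorsInto V)ᗮ)
    (hξ' : ξ' ∈ (σ.vectorsInto V)ᗮ) (h : ρ.coef η ξ - σ.coef η' ξ' ∈ V) :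
    ρ.coef η ξ = σ.coef η' ξ' := by
  have hsub : (ρ.prod σ).coef (WithLp.toLp 2 (η, -η')) (WithLp.toLp 2 (ξ, ξ')) =
      ρ.coef η ξ - σ.coef η' ξ' := by
    rw [coef_prod, sub_eq_add_neg]
    simp
  rw [← sub_eq_zero, ← hsub]
  refine (ρ.prod σ).coef_eq_zero_of_mem hVc hV (fun w hw => ?_) (by rwa [hsub])
  have hcoef (ζ : ρ.H) (ζ' : σ.H) : ρ.coef ζ w.fst + σ.coef ζ' w.snd ∈ V :=
    (ρ.prod σ).mem_vectorsInto.mp hw (WithLp.toLp 2 (ζ, ζ'))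
  have h₁ : w.fst ∈ ρ.vectorsInto V := ρ.mem_vectorsInto.mpr fun ζ => by
    simpa using hcoef ζ 0
  have h₂ : w.snd ∈ σ.vectorsInto V := σ.mem_vectorsInto.mpr fun ζ => by
    simpa using hcoef 0 ζ
  simp [hξ _ h₁, hξ' _ h₂]

end StarRep

lemma exists_coef_norm_sub_add_norm_le {N : Type u} [NonUnitalCStarAlgebra N]
    {V : Submodule ℂ (Dl N)} (hVc : IsClosed (V : Set (Dl N))) (hV : IsTranslationInvariant V)
    (c : Dl N) : ∃ (ρ : StarRep N) (η ξ : ρ.H), ξ ∈ (ρ.vectorsInto V)ᗮ ∧ c - ρ.coef η ξ ∈ V ∧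
      ‖c - ρ.coef η ξ‖ + ‖ρ.coef η ξ‖ ≤ ‖c‖ := by
  obtain ⟨ρ, η, ξ, rfl, hc⟩ := exists_eq_coef c
  have : CompleteSpace (ρ.vectorsInto V) := (ρ.isClosed_vectorsInto hVc).completeSpace_coe
  set P := (ρ.vectorsInto V).starProjection
  have hPP (ζ : ρ.H) : P (P ζ) = P ζ :=
    Submodule.starProjection_eq_self_iff.mpr (Submodule.starProjection_apply_mem _ _)
  have hcoef (η ξ : ρ.H) : ρ.coef (P η) ξ = ρ.coef η (P ξ) :=
    ρ.coef_starProjection _ (ρ.π_mem_vectorsInto hV) η ξ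
  have hsub : ρ.coef η ξ - ρ.coef η (ξ - P ξ) = ρ.coef η (P ξ) := by simp
  refine ⟨ρ, η, ξ - P ξ, Submodule.sub_starProjection_mem_orthogonal ξ, ?_, ?_⟩ <;> rw [hsub]
  · exact ρ.mem_vectorsInto.mp (Submodule.starProjection_apply_mem _ ξ) η
  have h₁ : ρ.coef η (P ξ) = ρ.coef (P η) (P ξ) := by rw [hcoef, hPP]
  have h₂ : ρ.coef η (ξ - P ξ) = ρ.coef (η - P η) (ξ - P ξ) := by
    simp [hcoef, hPP]
  have pythagoras (ζ : ρ.H) : ‖ζ‖ ^ 2 = ‖P ζ‖ ^ 2 + ‖ζ - P ζ‖ ^ 2 := by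
    simpa [Submodule.starProjection_orthogonal_val] using
      Submodule.norm_sq_eq_add_norm_sq_starProjection ζ (ρ.vectorsInto V)
  calc ‖ρ.coef η (P ξ)‖ + ‖ρ.coef η (ξ - P ξ)‖
      ≤ ‖P η‖ * ‖P ξ‖ + ‖η - P η‖ * ‖ξ - P ξ‖ := by
        rw [h₁, h₂]
        exact add_le_add (ρ.norm_coef_le _ _) (ρ.norm_coef_le _ _)
    _ ≤ ‖η‖ * ‖ξ‖ := by
        refine abs_le_of_sq_le_sq' ?_ (by positivity) |>.2
        rw [mul_pow, pythagoras η, pythagoras ξ]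
        nlinarith [sq_nonneg (‖P η‖ * ‖ξ - P ξ‖ - ‖η - P η‖ * ‖P ξ‖)]
    _ ≤ ‖ρ.coef η ξ‖ := hc

theorem IsTranslationInvariant.isSemiLSummand {N : Type u} [NonUnitalCStarAlgebra N]
    {V : Submodule ℂ (Dl N)} (hV : IsTranslationInvariant V) (hVc : IsClosed (V : Set (Dl N))) :
    IsSemiLSummand V := by
  intro c
  obtain ⟨ρ, η, ξ, hξ, hv, -⟩ := exists_coef_norm_sub_add_norm_le hVc hV c
  refine ⟨c - ρ.coef η ξ, hv, fun a ha => ?_⟩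
  obtain ⟨σ, η', ξ', hξ', hv', hn⟩ := exists_coef_norm_sub_add_norm_le hVc hV (c - a)
  -- The remainders of `c` and `c - a` agree modulo `V`, hence are equal.
  have h : ρ.coef η ξ = σ.coef η' ξ' := by
    refine ρ.coef_eq_of_sub_mem hVc hV σ hξ hξ' ?_
    convert V.sub_mem (V.add_mem ha hv') hv using 1
    abel
  rw [← h] at hn
  rwa [sub_right_comm, sub_sub_cancel]

end TranslationInvariant

section CStarIsometric

/-- The isometry of duals induced by an isometry of normed spaces. -/
def dualCongr {Y Z : Type*} [NormedAddCommGroup Y] [NormedSpace ℂ Y] [NormedAddCommGroup Z]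
    [NormedSpace ℂ Z] (e : Y ≃ₗᵢ[ℂ] Z) : (Y →L[ℂ] ℂ) ≃ₗᵢ[ℂ] Z →L[ℂ] ℂ where
  toLinearEquiv := (e.toContinuousLinearEquiv.arrowCongr (.refl ℂ ℂ)).toLinearEquiv
  norm_map' f := ContinuousLinearMap.opNorm_comp_linearIsometryEquiv f e.symm

variable {Y Z : Type u} [NormedAddCommGroup Y] [NormedSpace ℂ Y] [NormedAddCommGroup Z]
  [NormedSpace ℂ Z]

lemma IsSemiLEmbedded.congr (hY : IsSemiLEmbedded Y) (e : Y ≃ₗᵢ[ℂ] Z) : IsSemiLEmbedded Z := by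
  have h : Submodule.map (dualCongr (dualCongr e)).toLinearEquiv.toLinearMap (inclDD Y).range =
      (inclDD Z).range := by
    ext F
    constructor
    · rintro ⟨_, ⟨y, rfl⟩, rfl⟩
      exact ⟨e y, rfl⟩
    · rintro ⟨z, rfl⟩
      refine ⟨_, ⟨e.symm z, rfl⟩, ?_⟩
      ext f
      exact congrArg f (e.apply_symm_apply z)
  rw [IsSemiLEmbedded, ← h]
  exact hY.map _

/-- The functionals on `M ≅ Y*` which come from the predual `Y`. -/
def predualFunctionals (Θ : Dl Y ≃ₗᵢ[ℂ] Z) : Submodule ℂ (Dl Z) :=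
  (inclDD Y).range.map (dualCongr Θ).toLinearEquiv.toLinearMap

lemma isClosed_predualFunctionals [CompleteSpace Y] (Θ : Dl Y ≃ₗᵢ[ℂ] Z) :
    IsClosed (predualFunctionals Θ : Set (Dl Z)) :=
  (dualCongr Θ).toHomeomorph.isClosedMap _
    (AddMonoidHomClass.isometry_of_norm _ norm_inclDD).isClosedEmbedding.isClosed_range

lemma isSemiLEmbedded_of_predualFunctionals (Θ : Dl Y ≃ₗᵢ[ℂ] Z)
    (h : IsSemiLSummand (predualFunctionals Θ)) : IsSemiLEmbedded Y := by
  have hmap : Submodule.map (dualCongr Θ).symm.toLinearEquiv.toLinearMap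
      (predualFunctionals Θ) = (inclDD Y).range :=
    (Submodule.map_symm_eq_iff (dualCongr Θ).toLinearEquiv).2 rfl
  rw [IsSemiLEmbedded, ← hmap]
  exact h.map _

/-- A normed space is C⋆-isometric if it is isometric to a C⋆-algebra; no compatibility with a
module structure is asked for. -/
def IsCStarIsometric (Y : Type u) [NormedAddCommGroup Y] [NormedSpace ℂ Y] : Prop :=
  ∃ (N : Type u) (_ : NonUnitalCStarAlgebra N), Nonempty (Y ≃ₗᵢ[ℂ] N)

lemma IsCStarIsometric.bidual (h : IsCStarIsometric Y) : IsCStarIsometric (Dl (Dl Y)) := by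
  obtain ⟨N, _, ⟨e⟩⟩ := h
  obtain ⟨M, _, Θ, -⟩ := exists_bidual_equiv_nonUnitalCStarAlgebra N
  exact ⟨M, inferInstance, ⟨(dualCongr (dualCongr e)).trans Θ⟩⟩

lemma IsCStarIsometric.iter {B : Type u} [NonUnitalNormedRing B] [NormedSpace ℂ B]
    [SMulCommClass ℂ B B] [IsScalarTower ℂ B B] {M : BMod B} (h : IsCStarIsometric M.X) :
    ∀ k : ℕ, IsCStarIsometric (M.iter (2 * k)).X
  | 0 => h
  | k + 1 => (h.iter k).bidual

lemma isTranslationInvariant_predualFunctionals {N M : Type u} [NonUnitalCStarAlgebra N]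
    [NonUnitalCStarAlgebra M] (Θ : Dl (Dl N) ≃ₗᵢ[ℂ] M)
    (hΘ : ∀ F G, Θ (arensMul N F G) = Θ F * Θ G) :
    IsTranslationInvariant (predualFunctionals Θ) := by
  have hmul (y z : M) : Θ.symm (y * z) = arensMul N (Θ.symm y) (Θ.symm z) := by
    rw [LinearIsometryEquiv.symm_apply_eq, hΘ, Θ.apply_symm_apply, Θ.apply_symm_apply]
  constructor
  · rintro _ ⟨_, ⟨f, rfl⟩, rfl⟩ z
    obtain ⟨w, hw⟩ := exists_arensMul_apply_eq (Θ.symm z) f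
    refine ⟨_, ⟨w, rfl⟩, ContinuousLinearMap.ext fun y => ?_⟩
    exact (hw (Θ.symm y)).symm.trans (DFunLike.congr_fun (hmul z y) f).symm
  · rintro _ ⟨_, ⟨f, rfl⟩, rfl⟩ z
    refine ⟨_, ⟨arT (ContinuousLinearMap.mul ℂ N) (Θ.symm z) f, rfl⟩,
      ContinuousLinearMap.ext fun y => ?_⟩
    exact (DFunLike.congr_fun (hmul y z) f).symm

theorem IsCStarIsometric.isSemiLEmbedded_dual (h : IsCStarIsometric Y) :
    IsSemiLEmbedded (Dl Y) := by
  obtain ⟨N, _, ⟨e⟩⟩ := h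
  obtain ⟨M, _, Θ, hΘ⟩ := exists_bidual_equiv_nonUnitalCStarAlgebra N
  have hN : IsSemiLEmbedded (Dl N) := isSemiLEmbedded_of_predualFunctionals Θ
    ((isTranslationInvariant_predualFunctionals Θ hΘ).isSemiLSummand
      (isClosed_predualFunctionals Θ))
  exact hN.congr (dualCongr e.symm)

end CStarIsometric

section ClosedIdeals

open Filter Topology

variable {A : Type u} [NonUnitalCStarAlgebra A]

namespace ClosedIdeal

variable (I : ClosedIdeal A)

/-- The largest `*`-subalgebra contained in a closed ideal. It is a C⋆-algebra, whose
approximate unit serves to show that the ideal is self-adjoint. -/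
def starCore : NonUnitalStarSubalgebra ℂ A where
  carrier := {x | x ∈ I.car ∧ star x ∈ I.car}
  add_mem' hx hy := ⟨add_mem hx.1 hy.1, by rw [star_add]; exact add_mem hx.2 hy.2⟩
  zero_mem' := by simp
  mul_mem' {x y} hx hy :=
    ⟨I.mul_mem_left _ _ hy.1, by rw [star_mul]; exact I.mul_mem_left _ _ hx.2⟩
  smul_mem' c x hx := ⟨I.car.smul_mem c hx.1, by rw [star_smul]; exact I.car.smul_mem _ hx.2⟩
  star_mem' hx := ⟨hx.2, by rw [star_star]; exact hx.1⟩

lemma isClosed_starCore : IsClosed (I.starCore : Set A) :=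
  I.isClosed.inter (I.isClosed.preimage continuous_star)

end ClosedIdeal

lemma norm_sub_mul_sq_le (x : A) {e : A} (he : IsSelfAdjoint e) (he1 : ‖e‖ ≤ 1) :
    ‖x - x * e‖ ^ 2 ≤ 2 * ‖star x * x - star x * x * e‖ := by
  have h : star (x - x * e) * (x - x * e) =
      star x * x - star x * x * e - e * (star x * x - star x * x * e) := by
    rw [star_sub, star_mul, he.star_eq]
    noncomm_ring
  rw [sq, ← CStarRing.norm_star_mul_self, h]
  refine (norm_sub_le _ _).trans ?_
  have := (norm_mul_le e (star x * x - star x * x * e)).trans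
    (mul_le_of_le_one_left (norm_nonneg _) he1)
  linarith

lemma ClosedIdeal.star_mem (I : ClosedIdeal A) {x : A} (hx : x ∈ I.car) : star x ∈ I.car := by
  have := I.isClosed_starCore
  let _ := CStarAlgebra.spectralOrder I.starCore
  have _ := CStarAlgebra.spectralOrderedRing I.starCore
  have hl := CStarAlgebra.increasingApproximateUnit I.starCore
  have hy : star x * x ∈ I.starCore := by
    refine ⟨I.mul_mem_left _ _ hx, ?_⟩
    rw [star_mul, star_star]
    exact I.mul_mem_left _ _ hx
  have hye : Tendsto (fun e : I.starCore => 2 * ‖star x * x - star x * x * e‖)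
      (CStarAlgebra.approximateUnit I.starCore) (𝓝 0) := by
    have h := (continuous_subtype_val.tendsto _).comp (hl.tendsto_mul_left ⟨_, hy⟩)
    simpa using ((tendsto_const_nhds (x := star x * x)).sub h).norm.const_mul 2
  have hxe : Tendsto (fun e : I.starCore => ‖x - x * e‖ ^ 2)
      (CStarAlgebra.approximateUnit I.starCore) (𝓝 0) := by
    refine squeeze_zero' (.of_forall fun e => sq_nonneg _) ?_ hye
    filter_upwards [hl.eventually_isSelfAdjoint, hl.eventually_norm] with e he he1
    exact norm_sub_mul_sq_le x (congrArg Subtype.val he) he1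
  have hlim : Tendsto (fun e : I.starCore => x - x * e)
      (CStarAlgebra.approximateUnit I.starCore) (𝓝 0) := by
    rw [tendsto_zero_iff_norm_tendsto_zero]
    simpa using hxe.sqrt
  have hstar : Tendsto (fun e : I.starCore => star (x * e))
      (CStarAlgebra.approximateUnit I.starCore) (𝓝 (star x)) := by
    simpa using ((tendsto_const_nhds (x := x)).sub hlim).star
  refine I.isClosed.mem_of_tendsto hstar (.of_forall fun e => ?_)
  rw [star_mul]
  exact I.mul_mem_right _ _ e.2.2

lemma ClosedIdeal.isCStarIsometric (I : ClosedIdeal A) : IsCStarIsometric I.car := by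
  let T : NonUnitalStarSubalgebra ℂ A :=
    { I.car with
      mul_mem' := fun {a b} _ hb => I.mul_mem_left a b hb
      star_mem' := I.star_mem }
  have : IsClosed (T : Set A) := I.isClosed
  exact ⟨T, inferInstance, ⟨{ LinearEquiv.refl ℂ I.car with norm_map' := fun _ => rfl }⟩⟩

end ClosedIdeals

namespace BMod

section UnitizationAction

variable (M : BMod A)

/-- The unital extension of the left action on a bimodule to the unitization. -/
def unitizationL : Unitization ℂ A →ₐ[ℂ] M.X →L[ℂ] M.X :=
  Unitization.lift
    { toFun := M.act.l
      map_smul' := M.act.l.map_smul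
      map_zero' := map_zero _
      map_add' := map_add _
      map_mul' := fun a b => ContinuousLinearMap.ext (M.act.l_mul a b) }

/-- The unital extension of the right action on a bimodule to the unitization, with values in
the opposite algebra since right actions reverse products. -/
def unitizationR : Unitization ℂ A →ₐ[ℂ] (M.X →L[ℂ] M.X)ᵐᵒᵖ :=
  Unitization.lift
    { toFun := fun a => .op (M.act.r a)
      map_smul' := fun c a => congrArg MulOpposite.op (M.act.r.map_smul c a)
      map_zero' := congrArg MulOpposite.op (map_zero M.act.r)
      map_add' := fun a b => congrArg MulOpposite.op (map_add M.act.r a b)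
      map_mul' := fun a b =>
        congrArg MulOpposite.op (ContinuousLinearMap.ext (M.act.r_mul a b)) }

lemma unitizationL_apply (z : Unitization ℂ A) (x : M.X) :
    M.unitizationL z x = z.fst • x + M.act.l z.snd x := rfl

lemma unitizationR_apply (z : Unitization ℂ A) (x : M.X) :
    (M.unitizationR z).unop x = z.fst • x + M.act.r z.snd x := rfl

lemma unitizationL_mul (z w : Unitization ℂ A) (x : M.X) :
    M.unitizationL (z * w) x = M.unitizationL z (M.unitizationL w x) := by
  rw [map_mul]
  rfl

lemma unitizationR_mul (z w : Unitization ℂ A) (x : M.X) :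
    (M.unitizationR (z * w)).unop x = (M.unitizationR w).unop ((M.unitizationR z).unop x) := by
  rw [map_mul]
  rfl

lemma unitizationL_unitizationR (z w : Unitization ℂ A) (x : M.X) :
    M.unitizationL z ((M.unitizationR w).unop x) =
      (M.unitizationR w).unop (M.unitizationL z x) := by
  simp only [unitizationL_apply, unitizationR_apply, map_add, map_smul, M.act.lr, smul_add,
    smul_comm z.fst w.fst]
  abel

end UnitizationAction

end BMod

section UnitaryInvariance

variable {A : Type u} [NonUnitalCStarAlgebra A] {M : BMod A}

namespace BMod

/-- A bimodule is unitarily invariant if the unitaries of the unitization act on both sides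
by isometries. As the unitaries form a group, it is enough to ask for contractions. -/
def IsUnitarilyInvariant (M : BMod A) : Prop :=
  ∀ u ∈ unitary (Unitization ℂ A), ∀ x : M.X,
    ‖M.unitizationL u x‖ ≤ ‖x‖ ∧ ‖(M.unitizationR u).unop x‖ ≤ ‖x‖

namespace IsUnitarilyInvariant

lemma dualObj (hM : M.IsUnitarilyInvariant) : M.dualObj.IsUnitarilyInvariant := by
  have hcomp (f : Dl M.X) (T : M.X →L[ℂ] M.X) (hT : ∀ x, ‖T x‖ ≤ ‖x‖) : ‖f.comp T‖ ≤ ‖f‖ :=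
    ContinuousLinearMap.opNorm_le_bound _ (norm_nonneg _) fun x =>
      (f.le_opNorm _).trans (mul_le_mul_of_nonneg_left (hT x) (norm_nonneg _))
  intro u hu (f : Dl M.X)
  have hl : M.dualObj.unitizationL u f = f.comp (M.unitizationR u).unop := by
    refine ContinuousLinearMap.ext (M₁ := M.X) fun x => ?_
    exact ((map_add f _ _).trans (congrArg (· + _) (map_smul f _ _))).symm
  have hr : (M.dualObj.unitizationR u).unop f = f.comp (M.unitizationL u) := by
    refine ContinuousLinearMap.ext (M₁ := M.X) fun x => ?_
    exact ((map_add f _ _).trans (congrArg (· + _) (map_smul f _ _))).symm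
  rw [hl, hr]
  exact ⟨hcomp f _ fun x => (hM u hu x).2, hcomp f _ fun x => (hM u hu x).1⟩

lemma iter (hM : M.IsUnitarilyInvariant) : ∀ n, (M.iter n).IsUnitarilyInvariant
  | 0 => hM
  | n + 1 => (hM.iter n).dualObj

lemma norm_unitizationL (hM : M.IsUnitarilyInvariant) (u : unitary (Unitization ℂ A)) (x : M.X) :
    ‖M.unitizationL u x‖ = ‖x‖ := by
  refine le_antisymm (hM u u.2 x).1 ?_
  have h := (hM (star u) (star u).2 (M.unitizationL u x)).1
  rwa [← unitizationL_mul, Unitary.star_mul_self_of_mem u.2, map_one] at h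

lemma norm_unitizationR (hM : M.IsUnitarilyInvariant) (u : unitary (Unitization ℂ A)) (x : M.X) :
    ‖(M.unitizationR u).unop x‖ = ‖x‖ := by
  refine le_antisymm (hM u u.2 x).2 ?_
  have h := (hM (star u) (star u).2 ((M.unitizationR u).unop x)).2
  rwa [← unitizationR_mul, Unitary.mul_star_self_of_mem u.2, map_one] at h

/-- The affine action `x ↦ (u x + D u) u⋆` of the unitaries of the unitization on a unitarily
invariant bimodule, where `D` is extended by `0` to the scalars. -/
def twistedAction (hM : M.IsUnitarilyInvariant) (D : A →L[ℂ] M.X)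
    (u : unitary (Unitization ℂ A)) : M.X →ᵃⁱ[ℂ] M.X where
  toFun x := (M.unitizationR (star u : unitary _)).unop (M.unitizationL u x + D u.1.snd)
  linear := ((M.unitizationR (star u : unitary _)).unop ∘L M.unitizationL u).toLinearMap
  map_vadd' x y := by simp [add_assoc]
  norm_map x := (hM.norm_unitizationR _ _).trans (hM.norm_unitizationL _ _)

lemma twistedAction_apply (hM : M.IsUnitarilyInvariant) (D : A →L[ℂ] M.X)
    (u : unitary (Unitization ℂ A)) (x : M.X) : hM.twistedAction D u x =
      (M.unitizationR (star u : unitary _)).unop (M.unitizationL u x + D u.1.snd) := rfl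

lemma twistedAction_mul (hM : M.IsUnitarilyInvariant) {D : A →L[ℂ] M.X} (hD : IsDerivation M D)
    (u v : unitary (Unitization ℂ A)) (x : M.X) :
    hM.twistedAction D (u * v) x = hM.twistedAction D u (hM.twistedAction D v x) := by
  have hDuv : D (u * v : Unitization ℂ A).snd =
      M.unitizationL u (D v.1.snd) + (M.unitizationR v).unop (D u.1.snd) := by
    rw [Unitization.snd_mul, map_add, map_add, map_smul, map_smul, hD, unitizationL_apply,
      unitizationR_apply]
    abel
  have hv : (M.unitizationR (star v : unitary _)).unop
      ((M.unitizationR v).unop (D u.1.snd)) = D u.1.snd := by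
    rw [← unitizationR_mul, Unitary.coe_star, Unitary.mul_star_self_of_mem v.2, map_one]
    rfl
  simp only [twistedAction_apply, star_mul, Submonoid.coe_mul, hDuv, unitizationL_mul,
    unitizationR_mul, map_add, unitizationL_unitizationR, hv, add_assoc]

lemma isBounded_range_twistedAction_zero (hM : M.IsUnitarilyInvariant) (D : A →L[ℂ] M.X) :
    Bornology.IsBounded (Set.range fun u => hM.twistedAction D u 0) := by
  refine isBounded_iff_forall_norm_le.2 ⟨‖D‖ * 2, ?_⟩
  rintro _ ⟨u, rfl⟩
  have hu : ‖u.1.snd‖ ≤ 2 := by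
    have h := Unitization.lipschitzWith_addEquiv.dist_le_mul (u : Unitization ℂ A) 0
    rw [map_zero, dist_zero_right, dist_zero_right, CStarRing.norm_coe_unitary, mul_one] at h
    exact (_root_.norm_snd_le _).trans h
  beta_reduce
  rw [twistedAction_apply, hM.norm_unitizationR, map_zero, zero_add]
  exact (D.le_opNorm _).trans (mul_le_mul_of_nonneg_left hu (norm_nonneg _))

lemma exists_forall_twistedAction_eq (hM : M.IsUnitarilyInvariant) (hX : IsSemiLEmbedded M.X)
    {D : A →L[ℂ] M.X} (hD : IsDerivation M D) : ∃ x, ∀ u, hM.twistedAction D u x = x := by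
  obtain ⟨x, hx⟩ := hX.exists_forall_affineIsometry_eq (Set.range (hM.twistedAction D))
    (Set.range_nonempty _) (hM.isBounded_range_twistedAction_zero D) (by
      rintro _ ⟨u, rfl⟩ _ ⟨v, rfl⟩
      refine ⟨_, ⟨star u * v, rfl⟩, ?_⟩
      simp only [← hM.twistedAction_mul hD, ← mul_assoc, Unitary.mul_star_self, one_mul])
  exact ⟨x, fun u => hx _ ⟨u, rfl⟩⟩

theorem h1Zero (hM : M.IsUnitarilyInvariant) (hX : IsSemiLEmbedded M.X) : H1Zero M := by
  intro D hD
  obtain ⟨x, hx⟩ := hM.exists_forall_twistedAction_eq hX hD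
  let E : A →L[ℂ] M.X := M.act.r.flip x - M.act.l.flip x
  have hunitary : ∀ u ∈ unitary (Unitization ℂ A), D u.snd = E u.snd := fun u hu => by
    have h := congrArg (M.unitizationR u).unop (hx ⟨u, hu⟩)
    rw [twistedAction_apply, ← unitizationR_mul, Unitary.coe_star,
      Unitary.star_mul_self_of_mem hu, map_one] at h
    exact (eq_sub_of_add_eq' h).trans (add_sub_add_left_eq_sub _ _ _)
  have hE : (D : A →ₗ[ℂ] M.X) ∘ₗ Unitization.sndHom ℂ ℂ A = E ∘ₗ Unitization.sndHom ℂ ℂ A :=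
    LinearMap.ext_on (CStarAlgebra.span_unitary _) hunitary
  refine ⟨-x, fun a => ?_⟩
  rw [map_neg, map_neg, neg_sub_neg]
  exact LinearMap.congr_fun hE (a : Unitization ℂ A)

end IsUnitarilyInvariant

end BMod

lemma ClosedIdeal.isUnitarilyInvariant (I : ClosedIdeal A) :
    I.toBMod.IsUnitarilyInvariant := by
  intro u hu (x : I.car)
  have hl : ((u.fst • (x : A) + u.snd * x : A) : Unitization ℂ A) = u * (x : A) := by
    ext <;> simp
  have hr : ((u.fst • (x : A) + x * u.snd : A) : Unitization ℂ A) = (x : A) * u := by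
    ext <;> simp
  constructor
  · calc ‖I.toBMod.unitizationL u x‖ = ‖u * ((x : A) : Unitization ℂ A)‖ := by
          rw [← hl, Unitization.norm_inr]
          rfl
      _ = ‖(x : A)‖ := by rw [CStarRing.norm_mem_unitary_mul _ hu, Unitization.norm_inr]
      _ ≤ ‖x‖ := le_rfl
  · calc ‖(I.toBMod.unitizationR u).unop x‖ = ‖((x : A) : Unitization ℂ A) * u‖ := by
          rw [← hr, Unitization.norm_inr]
          rfl
      _ = ‖(x : A)‖ := by rw [CStarRing.norm_mul_mem_unitary _ hu, Unitization.norm_inr]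
      _ ≤ ‖x‖ := le_rfl

end UnitaryInvariance

/-- **Theorem 4.2.** Every C*-algebra is `(2k+1)`-ideally amenable for every
`k ≥ 0`. -/
theorem cstar_odd_ideally_amenable
    {A : Type u} [NonUnitalNormedRing A] [StarRing A] [CStarRing A]
    [NormedSpace ℂ A] [IsScalarTower ℂ A A] [SMulCommClass ℂ A A] [StarModule ℂ A]
    [CompleteSpace A]
    (k : ℕ) :
    NIdeallyAmenable A (2 * k + 1) := by
  let _ : NonUnitalCStarAlgebra A := {}
  intro I
  have hdual : IsSemiLEmbedded (Dl (I.toBMod.iter (2 * k)).X) :=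
    (IsCStarIsometric.iter I.isCStarIsometric k).isSemiLEmbedded_dual
  exact (I.isUnitarilyInvariant.iter (2 * k + 1)).h1Zero hdual
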